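/- Let B^H = {B^H(t) : t ∈ [0,1]} be a d-dimensional fractional Brownian motion of Hurst index H ∈ (0,1) with Hd < 1, let I = [a,b] with 0 < a < b ≤ 1, and let f : [0,1] → ℝ^d be an H-Hölder continuous function. Then there exist two Borel subsets E₁ and E₂ of I with dim(E₁) = dim(E₂) = Hd such that for every x ∈ ℝ^d: ℙ{∃ s ∈ E₁ : B^H(s) + f(s) = x} = 0 and ℙ{∃ s ∈ E₂ : B^H(s) + f(s) = x} > 0. -/

import Mathlib

open MeasureTheory Set ENNReal

/-- Covariance function of fractional Brownian motion of Hurst index `H`. -/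
noncomputable def fbmCov (H s t : ℝ) : ℝ :=
  (|s| ^ (2 * H) + |t| ^ (2 * H) - |t - s| ^ (2 * H)) / 2

/-- `B` is a `d`-dimensional fractional Brownian motion of Hurst index `H` on `[0,1]`
under the probability measure `ℙ`: its coordinates are independent copies of a
real-valued centered Gaussian process with continuous sample paths, starting at `0`,
whose covariance is `fbmCov H`. -/
structure IsFBM {Ω : Type*} [MeasurableSpace Ω] (ℙ : MeasureTheory.Measure Ω)
    (H : ℝ) (d : ℕ) (B : Ω → ℝ → EuclideanSpace ℝ (Fin d)) : Prop where
  meas : ∀ t : ℝ, Measurable fun ω => B ω t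
  cont : ∀ ω, ContinuousOn (fun t => B ω t) (Set.Icc 0 1)
  start : ∀ ω, B ω 0 = 0
  indep : ProbabilityTheory.iIndepFun
      (fun (i : Fin d) (ω : Ω) => fun t : ℝ => B ω t i) ℙ
  gaussian : ∀ i : Fin d, ∀ (n : ℕ) (t : Fin n → ℝ) (a : Fin n → ℝ),
      (∀ j, t j ∈ Set.Icc (0 : ℝ) 1) →
      ∃ v : NNReal, (v : ℝ) = ∑ j, ∑ k, a j * a k * fbmCov H (t j) (t k) ∧
        MeasureTheory.Measure.map (fun ω => ∑ j, a j * B ω (t j) i) ℙ =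
          ProbabilityTheory.gaussianReal 0 v

/-- The parabolic metric `ρ_{d_H}((s,x),(t,y)) = max(|t-s|^H, ‖x-y‖)` on `ℝ × ℝ^d`. -/
noncomputable def parabolicDist (H : ℝ) {d : ℕ}
    (p q : ℝ × EuclideanSpace ℝ (Fin d)) : ℝ :=
  max (|p.1 - q.1| ^ H) (dist p.2 q.2)

/-- `f` is `γ`-Hölder continuous on `s`. -/
def HolderWithExp {E : Type*} [NormedAddCommGroup E] (f : ℝ → E) (γ : ℝ) (s : Set ℝ) : Prop :=
  ∃ K : ℝ, ∀ x ∈ s, ∀ y ∈ s, ‖f x - f y‖ ≤ K * |x - y| ^ γ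

/-!
Both sets are binary Cantor sets whose intervals of generation `k` have length comparable to `c k`,
where `2 ^ k * c k ^ (H * d)` is a power of a linear function of `k`. Such a polynomial correction
does not affect the dimension, which is `H * d` in both cases, but it decides polarity.

If `2 ^ k * c k ^ (H * d) * (k + 1) ^ d` is summable, then `E₁` is polar. Hitting `x` on an interval
of generation `k` forces `B + f` to be within `R * c k ^ H * (k + 1)` of `x` at its left end: by
Borel–Cantelli the increments of `B` between consecutive generations of left ends are eventually at
most a constant times `c k ^ H * (k + 1)`, and they can be summed along a branch. There are `2 ^ k`
left ends, each contributing a probability of order `c k ^ (H * d) * (k + 1) ^ d`, so Borel–Cantelli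
applies again.

If `(2 ^ k * c k ^ (H * d))⁻¹` is summable, then the natural measure on `E₂` has finite
`H * d`-energy. For `2 ^ n * ε ^ d = 1` the number of left ends of generation `n` at which `B + f`
is within `ε` of `x` has mean bounded below and second moment bounded by the energy, since the joint
density of `(B s, B t)` is at most a constant times `|s - t| ^ (-H * d)`. By the second moment
method `B + f` comes within `ε` of `x` with a probability bounded below, and compactness of `E₂`
turns this into a hit.
-/

section Gaussian

open ProbabilityTheory
open scoped NNReal

lemma gaussianReal_le_smul_volume (m : ℝ) {v : ℝ≥0} (hv : v ≠ 0) :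
    gaussianReal m v ≤ ENNReal.ofReal (√(2 * Real.pi * v))⁻¹ • volume := by
  rw [gaussianReal_of_var_ne_zero m hv, ← withDensity_const]
  refine withDensity_mono (.of_forall fun x ↦ ENNReal.ofReal_le_ofReal ?_)
  have hexp : Real.exp (-(x - m) ^ 2 / (2 * v)) ≤ 1 :=
    Real.exp_le_one_iff.2 (div_nonpos_of_nonpos_of_nonneg (by simpa using sq_nonneg _) (by simp))
  exact mul_le_of_le_one_right (by positivity) hexp

lemma gaussianReal_prod_le_smul_volume (m n : ℝ) {v w : ℝ≥0} (hv : v ≠ 0) (hw : w ≠ 0) :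
    (gaussianReal m v).prod (gaussianReal n w) ≤
      ENNReal.ofReal (2 * Real.pi * √(v * w))⁻¹ • volume := by
  refine (Measure.prod_mono (gaussianReal_le_smul_volume m hv)
    (gaussianReal_le_smul_volume n hw)).trans_eq ?_
  rw [Measure.prod_smul_left, Measure.prod_smul_right, smul_smul,
    ← ENNReal.ofReal_mul (by positivity), ← mul_inv, ← Measure.volume_eq_prod]
  rw [Real.sqrt_mul (by positivity) (v : ℝ), Real.sqrt_mul (by positivity) (w : ℝ),
    Real.sqrt_mul (by positivity) (w : ℝ), mul_mul_mul_comm, Real.mul_self_sqrt (by positivity)]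

lemma le_gaussianReal_of_subset_closedBall {m r : ℝ} {v : ℝ≥0} (hv : v ≠ 0) {s : Set ℝ}
    (hs : s ⊆ Metric.closedBall m r) :
    ENNReal.ofReal ((√(2 * Real.pi * v))⁻¹ * Real.exp (-r ^ 2 / (2 * v))) * volume s
      ≤ gaussianReal m v s := by
  rw [gaussianReal_apply m hv, ← setLIntegral_const]
  refine setLIntegral_mono (measurable_gaussianPDF m v) fun x hx ↦ ENNReal.ofReal_le_ofReal ?_
  have hsq : (x - m) ^ 2 ≤ r ^ 2 := sq_le_sq' (abs_le.1 (hs hx)).1 (abs_le.1 (hs hx)).2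
  rw [gaussianPDFReal]
  gcongr

lemma hasSubgaussianMGF_id_gaussianReal {v c : ℝ≥0} (hvc : v ≤ c) :
    HasSubgaussianMGF id c (gaussianReal 0 v) where
  integrable_exp_mul := integrable_exp_mul_gaussianReal
  mgf_le t := by
    simp only [mgf_id_gaussianReal, zero_mul, zero_add]
    gcongr

lemma measureReal_le_abs_le_of_hasSubgaussianMGF {Ω : Type*} [MeasurableSpace Ω] {P : Measure Ω}
    [IsFiniteMeasure P] {X : Ω → ℝ} {c : ℝ≥0} (hX : HasSubgaussianMGF X c P) {l : ℝ} (hl : 0 ≤ l) :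
    P.real {ω | l ≤ |X ω|} ≤ 2 * Real.exp (-l ^ 2 / (2 * c)) := by
  have hsub : {ω | l ≤ |X ω|} = {ω | l ≤ X ω} ∪ {ω | l ≤ (-X) ω} := by
    ext ω
    exact le_abs (a := l) (b := X ω)
  rw [hsub, two_mul]
  exact (measureReal_union_le _ _).trans
    (add_le_add (hX.measure_ge_le hl) (hX.neg.measure_ge_le hl))

variable {Ω : Type*} [MeasurableSpace Ω] {P : Measure Ω} [IsProbabilityMeasure P] {U V : Ω → ℝ}

lemma variance_sub_const_mul (hU : MemLp U 2 P) (hV : MemLp V 2 P) (k : ℝ) :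
    Var[fun ω ↦ V ω - k * U ω; P] = Var[V; P] - 2 * k * cov[U, V; P] + k ^ 2 * Var[U; P] := by
  rw [variance_fun_sub hV (hU.const_mul k), covariance_const_mul_right, covariance_comm,
    variance_const_mul]
  ring

/-- Regressing `V` on `U` gives a Gaussian residual independent of `U`, and the change of
variables `(u, r) ↦ (u, r + k u)` preserves the area. -/
lemma map_prodMk_le_smul_volume_of_hasGaussianLaw (hUV : HasGaussianLaw (fun ω ↦ (U ω, V ω)) P)
    (hΔ : 0 < Var[U; P] * Var[V; P] - cov[U, V; P] ^ 2) :
    P.map (fun ω ↦ (U ω, V ω)) ≤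
      ENNReal.ofReal (2 * Real.pi * √(Var[U; P] * Var[V; P] - cov[U, V; P] ^ 2))⁻¹ • volume := by
  have hU := hUV.fst.memLp_two
  have hV := hUV.snd.memLp_two
  have hVarU : 0 < Var[U; P] :=
    (variance_nonneg U P).lt_of_ne' fun h ↦ absurd hΔ (by simp [h, sq_nonneg])
  set k := cov[U, V; P] / Var[U; P] with hk
  set R : Ω → ℝ := fun ω ↦ V ω - k * U ω with hR
  have hUR : HasGaussianLaw (fun ω ↦ (U ω, R ω)) P := hUV.map
    ((ContinuousLinearMap.fst ℝ ℝ ℝ).prod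
      (ContinuousLinearMap.snd ℝ ℝ ℝ - k • ContinuousLinearMap.fst ℝ ℝ ℝ))
  have hVarR : Var[R; P] = (Var[U; P] * Var[V; P] - cov[U, V; P] ^ 2) / Var[U; P] := by
    rw [variance_sub_const_mul hU hV, hk]
    field_simp
    ring
  have hcov : cov[U, R; P] = 0 := by
    rw [hR, covariance_fun_sub_right hU hV (hU.const_mul k), covariance_const_mul_right,
      covariance_self hUV.fst.aemeasurable, hk]
    field_simp
    ring
  have hVarR_pos : 0 < Var[R; P] := hVarR ▸ by positivity
  have hprod : P.map (fun ω ↦ (U ω, R ω)) ≤ ENNReal.ofReal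
      (2 * Real.pi * √(Var[U; P] * Var[V; P] - cov[U, V; P] ^ 2))⁻¹ • volume := by
    rw [(indepFun_iff_map_prod_eq_prod_map_map hUV.fst.aemeasurable hUR.snd.aemeasurable).1
      (hUR.indepFun_of_covariance_eq_zero hcov), hUV.fst.map_eq_gaussianReal,
      hUR.snd.map_eq_gaussianReal]
    refine (gaussianReal_prod_le_smul_volume _ _ (by simpa using hVarU)
      (by simpa using hVarR_pos)).trans_eq ?_
    rw [Real.coe_toNNReal _ hVarU.le, Real.coe_toNNReal _ hVarR_pos.le, hVarR,
      mul_div_cancel₀ _ hVarU.ne']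
  have hshear : MeasurePreserving (fun p : ℝ × ℝ ↦ (p.1, p.2 + k * p.1)) :=
    (MeasurePreserving.id volume).skew_product (g := fun u r ↦ r + k * u) (by fun_prop)
      (.of_forall fun u ↦ map_add_right_eq_self volume (k * u))
  calc P.map (fun ω ↦ (U ω, V ω))
      = (P.map (fun ω ↦ (U ω, R ω))).map (fun p ↦ (p.1, p.2 + k * p.1)) := by
        rw [AEMeasurable.map_map_of_aemeasurable (by fun_prop) hUR.aemeasurable]
        simp [hR, Function.comp_def]
    _ ≤ _ := (Measure.map_mono hprod hshear.measurable).trans_eq (by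
        rw [Measure.map_smul, hshear.map_eq])

end Gaussian

section MeasureEstimates

variable {Ω : Type*} [MeasurableSpace Ω] {μ : Measure Ω}

lemma sq_integral_mul_le {f g : Ω → ℝ} (hf : MemLp f 2 μ) (hg : MemLp g 2 μ) :
    (∫ ω, f ω * g ω ∂μ) ^ 2 ≤ (∫ ω, f ω ^ 2 ∂μ) * ∫ ω, g ω ^ 2 ∂μ := by
  have hfg : Integrable (fun ω ↦ f ω * g ω) μ := hf.integrable_mul hg
  have hlin (x : ℝ) : Integrable (fun ω ↦ f ω ^ 2 - 2 * x * (f ω * g ω)) μ :=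
    hf.integrable_sq.sub (hfg.const_mul _)
  have hquad (x : ℝ) : 0 ≤ (∫ ω, g ω ^ 2 ∂μ) * (x * x) + -2 * (∫ ω, f ω * g ω ∂μ) * x
      + ∫ ω, f ω ^ 2 ∂μ := by
    calc 0 ≤ ∫ ω, (f ω - x * g ω) ^ 2 ∂μ := integral_nonneg fun ω ↦ sq_nonneg _
      _ = ∫ ω, (f ω ^ 2 - 2 * x * (f ω * g ω) + x * x * g ω ^ 2) ∂μ := by
          congr 1 with ω
          ring
      _ = _ := by
          rw [integral_add (hlin x) (hg.integrable_sq.const_mul _),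
            integral_sub hf.integrable_sq (hfg.const_mul _), integral_const_mul, integral_const_mul]
          ring
  have := discrim_le_zero hquad
  rw [discrim] at this
  linarith

variable [IsFiniteMeasure μ]

/-- The Chung–Erdős inequality: Cauchy–Schwarz for `∑ i, 𝟙 (A i)` and `𝟙 (⋃ i, A i)`. -/
lemma sq_sum_measureReal_le {ι : Type*} [Fintype ι] {A : ι → Set Ω}
    (hA : ∀ i, MeasurableSet (A i)) :
    (∑ i, μ.real (A i)) ^ 2 ≤ (∑ i, ∑ j, μ.real (A i ∩ A j)) * μ.real (⋃ i, A i) := by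
  have hU := MeasurableSet.iUnion hA
  have hLp {s : Set Ω} (hs : MeasurableSet s) : MemLp (s.indicator (1 : Ω → ℝ)) 2 μ :=
    (memLp_const 1).indicator hs
  have hint {s : Set Ω} (hs : MeasurableSet s) : Integrable (s.indicator (1 : Ω → ℝ)) μ :=
    (integrable_const 1).indicator hs
  have hmul (s t : Set Ω) (ω : Ω) :
      s.indicator (1 : Ω → ℝ) ω * t.indicator 1 ω = (s ∩ t).indicator 1 ω := by
    rw [inter_indicator_one, Pi.mul_apply]
  have hCS := sq_integral_mul_le (memLp_finsetSum Finset.univ fun i _ ↦ hLp (hA i)) (hLp hU)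
  have hsq (ω : Ω) : (∑ i, (A i).indicator (1 : Ω → ℝ) ω) ^ 2
      = ∑ i, ∑ j, (A i ∩ A j).indicator 1 ω := by
    rw [sq, Finset.sum_mul_sum]
    simp only [hmul]
  simp only [hsq, sq (indicator _ _ _), Finset.sum_mul, hmul,
    inter_eq_self_of_subset_left (subset_iUnion A _), inter_self] at hCS
  rw [integral_finsetSum _ fun i _ ↦ hint (hA i), integral_finsetSum _ fun i _ ↦
    integrable_finsetSum Finset.univ fun j _ ↦ hint ((hA i).inter (hA j))] at hCS
  simpa only [integral_finsetSum Finset.univ fun j _ ↦ hint ((hA _).inter (hA j)),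
    integral_indicator_one, hA, hU, (hA _).inter (hA _)] using hCS

open Filter in
lemma le_measure_limsup_atTop {U : ℕ → Set Ω} (hU : ∀ n, MeasurableSet (U n)) {p : ℝ≥0∞}
    (hp : ∀ n, p ≤ μ (U n)) : p ≤ μ (limsup U atTop) := by
  rw [limsup_eq_iInf_iSup_of_nat]
  have hanti : Antitone fun n ↦ ⋃ i ≥ n, U i := fun _ _ hmn ↦
    biUnion_subset_biUnion_left fun _ ↦ le_trans hmn
  exact ge_of_tendsto' (tendsto_measure_iInter_atTop (fun n ↦
    (MeasurableSet.biUnion (to_countable _) fun i _ ↦ hU i).nullMeasurableSet) hanti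
    ⟨0, measure_ne_top μ _⟩) fun n ↦ (hp n).trans (measure_mono (subset_iUnion₂_of_subset n le_rfl
      Subset.rfl))

open Filter in
lemma ae_eventually_forall_notMem_of_summable {ι : ℕ → Type*} [∀ n, Fintype (ι n)]
    {A : ∀ n, ι n → Set Ω} {r : ℕ → ℝ} (hr : Summable r) (hA : ∀ n, ∑ i, μ.real (A n i) ≤ r n) :
    ∀ᵐ ω ∂μ, ∀ᶠ n in atTop, ∀ i, ω ∉ A n i := by
  have hle (n : ℕ) : μ (⋃ i, A n i) ≤ ENNReal.ofReal (r n) :=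
    (ENNReal.le_ofReal_iff_toReal_le (measure_ne_top _ _)
      ((Finset.sum_nonneg fun _ _ ↦ measureReal_nonneg).trans (hA n))).2
        ((measureReal_iUnion_fintype_le _).trans (hA n))
  filter_upwards [ae_eventually_notMem (ne_top_of_le_ne_top hr.tsum_ofReal_ne_top
    (ENNReal.tsum_le_tsum hle))] with ω hω
  filter_upwards [hω] with n hn i hi
  exact hn (mem_iUnion_of_mem i hi)

end MeasureEstimates

section FractionalBrownianMotion

open ProbabilityTheory

lemma measureReal_preimage_le_of_map_le_smul {Ω E : Type*} [MeasurableSpace Ω] [MeasurableSpace E]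
    {μ : Measure Ω} {ν : Measure E} {X : Ω → E} {c : ℝ} {S : Set E} (hX : AEMeasurable X μ)
    (h : μ.map X ≤ ENNReal.ofReal c • ν) (hc : 0 ≤ c) (hS : MeasurableSet S) (hνS : ν S ≠ ∞) :
    μ.real (X ⁻¹' S) ≤ c * ν.real S := by
  rw [measureReal_def, ← Measure.map_apply_of_aemeasurable hX hS, measureReal_def,
    ← ENNReal.toReal_ofReal hc, ← ENNReal.toReal_mul]
  exact ENNReal.toReal_mono (ENNReal.mul_ne_top ENNReal.ofReal_ne_top hνS) (h S)

lemma rpow_two_mul_eq_sq {x : ℝ} (hx : 0 ≤ x) (H : ℝ) : x ^ (2 * H) = (x ^ H) ^ 2 := by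
  rw [mul_comm, Real.rpow_mul hx, Real.rpow_two]

variable {H : ℝ}

lemma fbmCov_comm (s t : ℝ) : fbmCov H s t = fbmCov H t s := by
  rw [fbmCov, fbmCov, abs_sub_comm, add_comm (|s| ^ _)]

lemma fbmCov_self (hH : 0 < H) {t : ℝ} (ht : 0 ≤ t) : fbmCov H t t = t ^ (2 * H) := by
  simp [fbmCov, abs_of_nonneg ht, Real.zero_rpow (mul_pos two_pos hH).ne']

lemma rpow_sub_rpow_le_mul_rpow_sub (hH : H ≤ 1) {a s t : ℝ} (ha : 0 < a) (has : a ≤ s)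
    (hst : s ≤ t) (ht : t ≤ 1) : t ^ H - s ^ H ≤ (1 - a) ^ (1 - H) * (t - s) ^ H := by
  obtain rfl | hlt := hst.eq_or_lt
  · simp only [sub_self]
    have : (0 : ℝ) ≤ 1 - a := by linarith
    positivity
  have ht₀ : 0 < t := by linarith
  have hu₀ : 0 < (t - s) / t := div_pos (by linarith) ht₀
  have hua : (t - s) / t ≤ 1 - a := by
    rw [div_le_iff₀ ht₀]
    nlinarith
  have hconc : s / t ≤ (s / t) ^ H := by
    simpa using Real.rpow_le_rpow_of_exponent_ge (div_pos (ha.trans_le has) ht₀)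
      ((div_le_one ht₀).2 hst) hH
  calc t ^ H - s ^ H = t ^ H * (1 - (s / t) ^ H) := by
        rw [Real.div_rpow (ha.le.trans has) ht₀.le]
        field_simp
    _ ≤ t ^ H * ((t - s) / t) := by
        gcongr
        rw [sub_div, div_self ht₀.ne']
        linarith
    _ = ((t - s) / t) ^ (1 - H) * (t - s) ^ H := by
        rw [Real.rpow_sub hu₀, Real.rpow_one, Real.div_rpow (by linarith) ht₀.le]
        have := Real.rpow_pos_of_pos ht₀ H
        have := Real.rpow_pos_of_pos (sub_pos.2 hlt) H
        field_simp
    _ ≤ (1 - a) ^ (1 - H) * (t - s) ^ H := by gcongr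

lemma exists_mul_le_fbmCov_det (hH : H ∈ Ioo (0 : ℝ) 1) {a : ℝ} (ha : a ∈ Ioc (0 : ℝ) 1) :
    ∃ κ > 0, ∀ s ∈ Icc a 1, ∀ t ∈ Icc a 1,
      κ * (|t - s| ^ H) ^ 2 ≤ fbmCov H s s * fbmCov H t t - fbmCov H s t ^ 2 := by
  set θ := (1 - a) ^ (1 - H)
  have hθ₀ : 0 ≤ θ := Real.rpow_nonneg (by linarith [ha.2]) _
  have hθ₁ : θ < 1 :=
    Real.rpow_lt_one (by linarith [ha.2]) (by linarith [ha.1]) (by linarith [hH.2])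
  have ha' : 0 < a ^ H := Real.rpow_pos_of_pos ha.1 H
  have hθ₂ : 0 < 1 - θ ^ 2 := by nlinarith
  refine ⟨(1 - θ ^ 2) * (a ^ H) ^ 2 / 4, by positivity, fun s hs t ht ↦ ?_⟩
  wlog hst : s ≤ t generalizing s t
  · rw [abs_sub_comm, fbmCov_comm s t, mul_comm (fbmCov H s s)]
    exact this t ht s hs (le_of_not_ge hst)
  have hs₀ : 0 ≤ s := ha.1.le.trans hs.1
  have ht₀ : 0 ≤ t := ha.1.le.trans ht.1
  have hts : 0 ≤ t - s := sub_nonneg.2 hst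
  have hincr : t ^ H - s ^ H ≤ θ * (t - s) ^ H :=
    rpow_sub_rpow_le_mul_rpow_sub hH.2.le ha.1 hs.1 hst ht.2
  have has : a ^ H ≤ s ^ H := Real.rpow_le_rpow ha.1.le hs.1 hH.1.le
  have hst' : s ^ H ≤ t ^ H := Real.rpow_le_rpow hs₀ hst hH.1.le
  have hrt : (t - s) ^ H ≤ t ^ H := Real.rpow_le_rpow hts (by linarith) hH.1.le
  have hr₀ : 0 ≤ (t - s) ^ H := Real.rpow_nonneg hts H
  rw [fbmCov_self hH.1 hs₀, fbmCov_self hH.1 ht₀, fbmCov, abs_of_nonneg hs₀, abs_of_nonneg ht₀,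
    abs_of_nonneg hts, rpow_two_mul_eq_sq hs₀, rpow_two_mul_eq_sq ht₀, rpow_two_mul_eq_sq hts]
  generalize s ^ H = x at *
  generalize t ^ H = y at *
  generalize (t - s) ^ H = r at *
  have hfar : (1 - θ ^ 2) * r ^ 2 ≤ r ^ 2 - (y - x) ^ 2 := by nlinarith
  have hsum : (a ^ H) ^ 2 ≤ (x + y) ^ 2 - r ^ 2 := by nlinarith
  calc (1 - θ ^ 2) * (a ^ H) ^ 2 / 4 * r ^ 2 = ((1 - θ ^ 2) * r ^ 2) * (a ^ H) ^ 2 / 4 := by ring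
    _ ≤ (r ^ 2 - (y - x) ^ 2) * ((x + y) ^ 2 - r ^ 2) / 4 := by
        gcongr
        nlinarith [sq_nonneg r]
    _ = x ^ 2 * y ^ 2 - ((x ^ 2 + y ^ 2 - r ^ 2) / 2) ^ 2 := by ring

namespace IsFBM

variable {Ω : Type*} [MeasurableSpace Ω] {P : Measure Ω} {d : ℕ}
  {B : Ω → ℝ → EuclideanSpace ℝ (Fin d)}

lemma measurable_coord (hB : IsFBM P H d B) (t : ℝ) (i : Fin d) : Measurable fun ω ↦ B ω t i :=
  (EuclideanSpace.proj (𝕜 := ℝ) i).measurable.comp (hB.meas t)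

lemma exists_map_linearComb_eq_gaussianReal (hB : IsFBM P H d B) {s t : ℝ}
    (hs : s ∈ Icc (0 : ℝ) 1) (ht : t ∈ Icc (0 : ℝ) 1) (i : Fin d) (x y : ℝ) :
    ∃ v : NNReal,
      (v : ℝ) = x ^ 2 * fbmCov H s s + 2 * x * y * fbmCov H s t + y ^ 2 * fbmCov H t t ∧
      P.map (fun ω ↦ x * B ω s i + y * B ω t i) = gaussianReal 0 v := by
  obtain ⟨v, hv, h⟩ := hB.gaussian i 2 ![s, t] ![x, y] (Fin.forall_fin_two.2 ⟨hs, ht⟩)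
  refine ⟨v, ?_, by simpa [Fin.sum_univ_two] using h⟩
  simp only [hv, Fin.sum_univ_two, Matrix.cons_val_zero, Matrix.cons_val_one, fbmCov_comm t s]
  ring

lemma map_coord_eq_gaussianReal (hB : IsFBM P H d B) (hH : 0 < H) {t : ℝ}
    (ht : t ∈ Icc (0 : ℝ) 1) (i : Fin d) :
    P.map (fun ω ↦ B ω t i) = gaussianReal 0 (t ^ (2 * H)).toNNReal := by
  obtain ⟨v, hv, h⟩ := hB.exists_map_linearComb_eq_gaussianReal ht ht i 1 0
  simp only [fbmCov_self hH ht.1, one_pow, one_mul, mul_zero, zero_mul, add_zero, ne_eq,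
    OfNat.ofNat_ne_zero, not_false_eq_true, zero_pow] at hv h
  rw [h, ← hv, Real.toNNReal_coe]

lemma map_increment_eq_gaussianReal (hB : IsFBM P H d B) (hH : 0 < H) {s t : ℝ}
    (hs : s ∈ Icc (0 : ℝ) 1) (ht : t ∈ Icc (0 : ℝ) 1) (i : Fin d) :
    P.map (fun ω ↦ B ω t i - B ω s i) = gaussianReal 0 (|t - s| ^ (2 * H)).toNNReal := by
  obtain ⟨v, hv, h⟩ := hB.exists_map_linearComb_eq_gaussianReal hs ht i (-1) 1
  have hvar : (v : ℝ) = |t - s| ^ (2 * H) := by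
    rw [hv, fbmCov_self hH hs.1, fbmCov_self hH ht.1, fbmCov, abs_of_nonneg hs.1,
      abs_of_nonneg ht.1]
    ring
  rw [← hvar, Real.toNNReal_coe, ← h]
  congr 1 with ω
  ring

lemma hasGaussianLaw_prodMk (hB : IsFBM P H d B) {s t : ℝ} (hs : s ∈ Icc (0 : ℝ) 1)
    (ht : t ∈ Icc (0 : ℝ) 1) (i : Fin d) : HasGaussianLaw (fun ω ↦ (B ω s i, B ω t i)) P := by
  have hmeas := (hB.measurable_coord s i).prodMk (hB.measurable_coord t i)
  refine ⟨isGaussian_of_map_eq_gaussianReal fun L ↦ ?_⟩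
  obtain ⟨v, -, h⟩ := hB.exists_map_linearComb_eq_gaussianReal hs ht i (L (1, 0)) (L (0, 1))
  refine ⟨0, v, ?_⟩
  rw [Measure.map_map L.measurable hmeas, ← h]
  congr 1 with ω
  rw [Function.comp_apply, show (B ω s i, B ω t i) = B ω s i • ((1, 0) : ℝ × ℝ)
    + B ω t i • ((0, 1) : ℝ × ℝ) by simp, map_add, map_smul, map_smul, smul_eq_mul, smul_eq_mul,
    mul_comm, mul_comm (B ω t i)]

lemma measureReal_forall_mem_eq_prod (hB : IsFBM P H d B) (s t : ℝ) {G : Fin d → Set (ℝ × ℝ)}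
    (hG : ∀ i, MeasurableSet (G i)) :
    P.real {ω | ∀ i, (B ω s i, B ω t i) ∈ G i} = ∏ i, P.real {ω | (B ω s i, B ω t i) ∈ G i} := by
  have h := congrArg ENNReal.toReal <| (hB.indep.comp (fun i (g : ℝ → ℝ) ↦ (g s, g t)) fun i ↦
    by fun_prop).measure_inter_preimage_eq_mul Finset.univ fun i _ ↦ hG i
  simp only [Finset.mem_univ, iInter_true, ENNReal.toReal_prod] at h
  rw [ofPred_forall]
  exact h

variable [IsProbabilityMeasure P]

lemma covariance_coord (hB : IsFBM P H d B) {s t : ℝ} (hs : s ∈ Icc (0 : ℝ) 1)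
    (ht : t ∈ Icc (0 : ℝ) 1) (i : Fin d) :
    cov[fun ω ↦ B ω s i, fun ω ↦ B ω t i; P] = fbmCov H s t := by
  have hvar (x y : ℝ) : Var[fun ω ↦ x * B ω s i + y * B ω t i; P]
      = x ^ 2 * fbmCov H s s + 2 * x * y * fbmCov H s t + y ^ 2 * fbmCov H t t := by
    obtain ⟨v, hv, h⟩ := hB.exists_map_linearComb_eq_gaussianReal hs ht i x y
    have hX : Measurable fun ω ↦ x * B ω s i + y * B ω t i :=
      ((hB.measurable_coord s i).const_mul x).add ((hB.measurable_coord t i).const_mul y)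
    rw [← hv, ← variance_id_gaussianReal (μ := 0), ← h, variance_id_map hX.aemeasurable]
  have hUV := hB.hasGaussianLaw_prodMk hs ht i
  have h := variance_fun_add hUV.fst.memLp_two hUV.snd.memLp_two
  have h₁₁ := hvar 1 1
  have h₁₀ := hvar 1 0
  have h₀₁ := hvar 0 1
  simp only [one_mul, zero_mul, add_zero, zero_add] at h₁₁ h₁₀ h₀₁
  linarith

lemma variance_coord (hB : IsFBM P H d B) {t : ℝ} (ht : t ∈ Icc (0 : ℝ) 1) (i : Fin d) :
    Var[fun ω ↦ B ω t i; P] = fbmCov H t t := by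
  rw [← hB.covariance_coord ht ht i, covariance_self (hB.measurable_coord t i).aemeasurable]

lemma measureReal_le_abs_increment_le (hB : IsFBM P H d B) (hH : 0 < H) {s t δ l : ℝ}
    (hs : s ∈ Icc (0 : ℝ) 1) (ht : t ∈ Icc (0 : ℝ) 1) (hst : |t - s| ≤ δ) (hl : 0 ≤ l)
    (i : Fin d) :
    P.real {ω | l ≤ |B ω t i - B ω s i|} ≤ 2 * Real.exp (-l ^ 2 / (2 * δ ^ (2 * H))) := by
  have hδ : 0 ≤ δ := (abs_nonneg _).trans hst
  have hsub := hasSubgaussianMGF_id_gaussianReal (v := (|t - s| ^ (2 * H)).toNNReal)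
    (c := (δ ^ (2 * H)).toNNReal) (by gcongr)
  rw [← hB.map_increment_eq_gaussianReal hH hs ht i] at hsub
  have := measureReal_le_abs_le_of_hasSubgaussianMGF (hsub.of_map
    ((hB.measurable_coord t i).sub (hB.measurable_coord s i)).aemeasurable) hl
  rwa [Real.coe_toNNReal _ (by positivity)] at this

end IsFBM

end FractionalBrownianMotion

section CubeEvents

open ProbabilityTheory Metric

variable {Ω : Type*} {d : ℕ}

/-- The event that the process `B` lies at time `t` in the closed cube with centre `y` and
half-side `ε`. -/
def cubeEvent (B : Ω → ℝ → EuclideanSpace ℝ (Fin d)) (t : ℝ) (y : EuclideanSpace ℝ (Fin d))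
    (ε : ℝ) : Set Ω :=
  {ω | ∀ i, B ω t i ∈ closedBall (y i) ε}

variable [MeasurableSpace Ω] {P : Measure Ω} {H : ℝ} {B : Ω → ℝ → EuclideanSpace ℝ (Fin d)}

namespace IsFBM

lemma measurableSet_cubeEvent (hB : IsFBM P H d B) (t : ℝ) (y : EuclideanSpace ℝ (Fin d))
    (ε : ℝ) : MeasurableSet (cubeEvent B t y ε) := by
  rw [cubeEvent, ofPred_forall]
  exact MeasurableSet.iInter fun i ↦ hB.measurable_coord t i measurableSet_closedBall

lemma measureReal_cubeEvent_eq_prod (hB : IsFBM P H d B) (t : ℝ) (y : EuclideanSpace ℝ (Fin d))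
    (ε : ℝ) : P.real (cubeEvent B t y ε) = ∏ i, P.real {ω | B ω t i ∈ closedBall (y i) ε} :=
  hB.measureReal_forall_mem_eq_prod t t (G := fun i ↦ Prod.fst ⁻¹' closedBall (y i) ε)
    fun _ ↦ measurable_fst measurableSet_closedBall

lemma measureReal_cubeEvent_inter_eq_prod (hB : IsFBM P H d B) (s t : ℝ)
    (y z : EuclideanSpace ℝ (Fin d)) (ε : ℝ) :
    P.real (cubeEvent B s y ε ∩ cubeEvent B t z ε) =
      ∏ i, P.real {ω | (B ω s i, B ω t i) ∈ closedBall (y i) ε ×ˢ closedBall (z i) ε} := by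
  rw [← hB.measureReal_forall_mem_eq_prod s t
    fun _ ↦ measurableSet_closedBall.prod measurableSet_closedBall]
  congr 1 with ω
  exact forall_and.symm

lemma exists_measureReal_cubeEvent_le (hB : IsFBM P H d B) (hH : 0 < H) {a : ℝ} (ha : 0 < a) :
    ∃ C > 0, ∀ t ∈ Icc a 1, ∀ y, ∀ ε ≥ 0, P.real (cubeEvent B t y ε) ≤ C * ε ^ d := by
  set C := (√(2 * Real.pi * a ^ (2 * H)))⁻¹ * 2 with hC
  refine ⟨C ^ d, by positivity, fun t ht y ε hε ↦ ?_⟩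
  have ht₀ : 0 < t := ha.trans_le ht.1
  have hcoord (i : Fin d) : P.real {ω | B ω t i ∈ closedBall (y i) ε} ≤ C * ε := by
    have hlaw := gaussianReal_le_smul_volume 0 (v := (t ^ (2 * H)).toNNReal)
      (by simpa using Real.rpow_pos_of_pos ht₀ _)
    rw [← hB.map_coord_eq_gaussianReal hH ⟨ht₀.le, ht.2⟩ i,
      Real.coe_toNNReal _ (by positivity)] at hlaw
    calc _ ≤ (√(2 * Real.pi * t ^ (2 * H)))⁻¹ * volume.real (closedBall (y i) ε) :=
          measureReal_preimage_le_of_map_le_smul (hB.measurable_coord t i).aemeasurable hlaw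
            (by positivity) measurableSet_closedBall measure_closedBall_lt_top.ne
      _ ≤ C * ε := by
          rw [Real.volume_real_closedBall hε, hC, mul_assoc _ 2 ε]
          gcongr
          exact ht.1
  rw [hB.measureReal_cubeEvent_eq_prod, ← mul_pow]
  calc _ ≤ ∏ _i : Fin d, C * ε :=
        Finset.prod_le_prod (fun _ _ ↦ measureReal_nonneg) fun i _ ↦ hcoord i
    _ = (C * ε) ^ d := by simp

lemma exists_le_measureReal_cubeEvent [IsProbabilityMeasure P] (hB : IsFBM P H d B) (hH : 0 < H)
    {a : ℝ} (ha : 0 < a) (M : ℝ) :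
    ∃ c > 0, ∀ t ∈ Icc a 1, ∀ y, (∀ i, |y i| ≤ M) → ∀ ε ∈ Icc (0 : ℝ) 1,
      c * ε ^ d ≤ P.real (cubeEvent B t y ε) := by
  set c := (√(2 * Real.pi))⁻¹ * Real.exp (-(M + 1) ^ 2 / (2 * a ^ (2 * H))) * 2 with hc
  refine ⟨c ^ d, by positivity, fun t ht y hy ε hε ↦ ?_⟩
  have ht₀ : 0 < t := ha.trans_le ht.1
  have hv : 2 * Real.pi * t ^ (2 * H) ≤ 2 * Real.pi :=
    mul_le_of_le_one_right (by positivity) (Real.rpow_le_one ht₀.le ht.2 (by positivity))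
  have hcoord (i : Fin d) : c * ε ≤ P.real {ω | B ω t i ∈ closedBall (y i) ε} := by
    have hsub : closedBall (y i) ε ⊆ closedBall 0 (M + 1) := closedBall_subset_closedBall' (by
      rw [Real.dist_eq, sub_zero]
      linarith [hy i, hε.2])
    have hlaw := le_gaussianReal_of_subset_closedBall (v := (t ^ (2 * H)).toNNReal)
      (by simpa using Real.rpow_pos_of_pos ht₀ _) hsub
    rw [← hB.map_coord_eq_gaussianReal hH ⟨ht₀.le, ht.2⟩ i, Real.volume_closedBall,
      Real.coe_toNNReal _ (by positivity), ← ENNReal.ofReal_mul (by positivity),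
      Measure.map_apply (hB.measurable_coord t i) measurableSet_closedBall] at hlaw
    refine le_trans ?_ ((ENNReal.ofReal_le_iff_le_toReal (measure_ne_top _ _)).1 hlaw)
    rw [hc, mul_assoc _ 2 ε]
    have hε₀ := hε.1
    simp only [neg_div]
    gcongr
    exact ht.1
  rw [hB.measureReal_cubeEvent_eq_prod, ← mul_pow]
  calc (c * ε) ^ d = ∏ _i : Fin d, c * ε := by simp
    _ ≤ _ := Finset.prod_le_prod (fun _ _ ↦ mul_nonneg (by positivity) hε.1) fun i _ ↦ hcoord i

lemma exists_measureReal_cubeEvent_inter_le [IsProbabilityMeasure P] (hB : IsFBM P H d B)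
    (hH : H ∈ Ioo (0 : ℝ) 1) {a : ℝ} (ha : a ∈ Ioc (0 : ℝ) 1) :
    ∃ C > 0, ∀ s ∈ Icc a 1, ∀ t ∈ Icc a 1, s ≠ t → ∀ y z, ∀ ε ≥ 0,
      P.real (cubeEvent B s y ε ∩ cubeEvent B t z ε) ≤ C * (ε ^ d) ^ 2 / |s - t| ^ (H * d) := by
  obtain ⟨κ, hκ₀, hκ⟩ := exists_mul_le_fbmCov_det hH ha
  set C := 4 / (2 * Real.pi * √κ) with hC
  refine ⟨C ^ d, by positivity, fun s hs t ht hst y z ε hε ↦ ?_⟩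
  have hs' : s ∈ Icc (0 : ℝ) 1 := ⟨ha.1.le.trans hs.1, hs.2⟩
  have ht' : t ∈ Icc (0 : ℝ) 1 := ⟨ha.1.le.trans ht.1, ht.2⟩
  have : 0 < |s - t| ^ H := Real.rpow_pos_of_pos (abs_pos.2 (sub_ne_zero.2 hst)) H
  have hdet := hκ s hs t ht
  rw [abs_sub_comm] at hdet
  have hcoord (i : Fin d) : P.real {ω | (B ω s i, B ω t i) ∈
      closedBall (y i) ε ×ˢ closedBall (z i) ε} ≤ C * ε ^ 2 / |s - t| ^ H := by
    have hlaw := map_prodMk_le_smul_volume_of_hasGaussianLaw (hB.hasGaussianLaw_prodMk hs' ht' i)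
    rw [hB.variance_coord hs', hB.variance_coord ht', hB.covariance_coord hs' ht'] at hlaw
    have hΔ : √κ * |s - t| ^ H ≤ √(fbmCov H s s * fbmCov H t t - fbmCov H s t ^ 2) :=
      Real.le_sqrt_of_sq_le (by rwa [mul_pow, Real.sq_sqrt hκ₀.le])
    calc _ ≤ (2 * Real.pi * √(fbmCov H s s * fbmCov H t t - fbmCov H s t ^ 2))⁻¹ *
          volume.real (closedBall (y i) ε ×ˢ closedBall (z i) ε) :=
          measureReal_preimage_le_of_map_le_smul
            ((hB.measurable_coord s i).prodMk (hB.measurable_coord t i)).aemeasurable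
            (hlaw (lt_of_lt_of_le (by positivity) hdet)) (by positivity)
            (measurableSet_closedBall.prod measurableSet_closedBall)
            ((isCompact_closedBall _ _).prod (isCompact_closedBall _ _)).measure_lt_top.ne
      _ ≤ (2 * Real.pi * (√κ * |s - t| ^ H))⁻¹ * (2 * ε * (2 * ε)) := by
          rw [Measure.volume_eq_prod, measureReal_prod_prod, Real.volume_real_closedBall hε,
            Real.volume_real_closedBall hε]
          gcongr
      _ = C * ε ^ 2 / |s - t| ^ H := by
          rw [hC]
          field_simp
          ring
  rw [hB.measureReal_cubeEvent_inter_eq_prod]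
  calc _ ≤ ∏ _i : Fin d, C * ε ^ 2 / |s - t| ^ H :=
        Finset.prod_le_prod (fun _ _ ↦ measureReal_nonneg) fun i _ ↦ hcoord i
    _ = C ^ d * (ε ^ d) ^ 2 / |s - t| ^ (H * d) := by
        rw [Finset.prod_const, Finset.card_univ, Fintype.card_fin, div_pow, mul_pow,
          pow_right_comm, Real.rpow_mul_natCast (abs_nonneg _)]

end IsFBM

end CubeEvents

section BinaryCantorSet

open Filter Topology PiNat

/-- The scale sequences of binary Cantor sets: `c k` is the offset between the two children of an
interval of generation `k`, and the ratio bound `q < 1 / 2` keeps the children of all generations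
disjoint. -/
structure IsCantorScale (c : ℕ → ℝ) (q : ℝ) : Prop where
  pos : ∀ k, 0 < c k
  lt_half : q < 1 / 2
  succ_le : ∀ k, c (k + 1) ≤ q * c k

/-- The point of the Cantor set with left end `a` and scale `c` whose address is the binary
sequence `e`. -/
noncomputable def cantorPoint (a : ℝ) (c : ℕ → ℝ) (e : ℕ → Fin 2) : ℝ :=
  a + ∑' k, ((e k : ℕ) : ℝ) * c k

/-- The binary Cantor set with left end `a` and scale `c`. -/
def binaryCantorSet (a : ℝ) (c : ℕ → ℝ) : Set ℝ :=
  range (cantorPoint a c)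

/-- Extension of a finite binary word by zeros. -/
def padZero (n : ℕ) (w : Fin n → Fin 2) : ℕ → Fin 2 :=
  fun k ↦ if h : k < n then w ⟨k, h⟩ else 0

/-- The left end of the interval of generation `n` with address `w` in the construction of
`binaryCantorSet a c`. -/
noncomputable def cantorNode (a : ℝ) (c : ℕ → ℝ) {n : ℕ} (w : Fin n → Fin 2) : ℝ :=
  cantorPoint a c (padZero n w)

lemma cantorNode_mem_binaryCantorSet (a : ℝ) (c : ℕ → ℝ) {n : ℕ} (w : Fin n → Fin 2) :
    cantorNode a c w ∈ binaryCantorSet a c :=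
  mem_range_self _

lemma mem_cylinder_padZero (e : ℕ → Fin 2) (n : ℕ) : e ∈ cylinder (padZero n fun i ↦ e i) n :=
  fun k hk ↦ by simp [padZero, hk]

lemma padZero_injective (n : ℕ) : Function.Injective (padZero n) := fun w w' h ↦ by
  ext1 i
  simpa [padZero] using congrFun h i

lemma firstDiff_padZero_lt {n : ℕ} {w w' : Fin n → Fin 2} (h : w ≠ w') :
    firstDiff (padZero n w) (padZero n w') < n := by
  by_contra! hn
  exact apply_firstDiff_ne ((padZero_injective n).ne h) (by simp [padZero, hn.not_gt])

lemma padZero_mem_cylinder_succ {n : ℕ} (w : Fin (n + 1) → Fin 2) :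
    padZero n (Fin.init w) ∈ cylinder (padZero (n + 1) w) n := fun k hk ↦ by
  simp [padZero, hk, hk.trans n.lt_succ_self, Fin.init]

lemma card_words_agree_le {n k : ℕ} (hk : k ≤ n) (w : Fin n → Fin 2) :
    (Finset.card {w' : Fin n → Fin 2 | ∀ i : Fin n, i < k → w' i = w i} : ℝ) ≤
      2 ^ n * (1 / 2) ^ k := by
  have hcard : Finset.card {w' : Fin n → Fin 2 | ∀ i : Fin n, i < k → w' i = w i} ≤
      (Finset.univ : Finset (Fin (n - k) → Fin 2)).card := by
    refine Finset.card_le_card_of_injOn (fun w' j ↦ w' ⟨k + j, by lia⟩) (by simp)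
      fun u hu v hv huv ↦ ?_
    ext1 i
    rcases lt_or_ge (i : ℕ) k with hi | hi
    · rw [(Finset.mem_filter.1 hu).2 i hi, (Finset.mem_filter.1 hv).2 i hi]
    · simpa [Nat.add_sub_cancel' hi] using congrFun huv ⟨i - k, by lia⟩
  rw [one_div, inv_pow, ← pow_sub₀ _ two_ne_zero hk]
  simpa using (Nat.cast_le (α := ℝ)).2 hcard

lemma sum_firstDiff_padZero_le {φ : ℕ → ℝ} (hφ : ∀ k, 0 ≤ φ k) (n : ℕ) (w : Fin n → Fin 2) :
    ∑ w' ∈ {w}ᶜ, φ (firstDiff (padZero n w) (padZero n w')) ≤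
      2 ^ n * ∑ k ∈ Finset.range n, (1 / 2) ^ k * φ k := by
  classical
  have hmaps : ∀ w' ∈ ({w}ᶜ : Finset (Fin n → Fin 2)),
      firstDiff (padZero n w) (padZero n w') ∈ Finset.range n := fun w' hw' ↦
    Finset.mem_range.2 (firstDiff_padZero_lt (by simpa [eq_comm] using hw'))
  rw [← Finset.sum_fiberwise_of_maps_to hmaps, Finset.mul_sum]
  refine Finset.sum_le_sum fun k hk ↦ ?_
  have hcard : (Finset.card {w' ∈ ({w}ᶜ : Finset (Fin n → Fin 2)) |
      firstDiff (padZero n w) (padZero n w') = k} : ℝ) ≤ 2 ^ n * (1 / 2) ^ k := by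
    have hk' : k ≤ n := (Finset.mem_range.1 hk).le
    refine le_trans (Nat.cast_le.2 (Finset.card_le_card fun w' hw' ↦ ?_))
      (card_words_agree_le hk' w)
    obtain rfl := (Finset.mem_filter.1 hw').2
    rw [Finset.mem_filter_univ]
    intro i hi
    simpa [padZero] using (apply_eq_of_lt_firstDiff hi).symm
  calc _ = ∑ w' ∈ ({w}ᶜ : Finset (Fin n → Fin 2)) with
        firstDiff (padZero n w) (padZero n w') = k, φ k :=
        Finset.sum_congr rfl fun w' hw' ↦ by rw [(Finset.mem_filter.1 hw').2]
    _ ≤ 2 ^ n * (1 / 2) ^ k * φ k := by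
        rw [Finset.sum_const, nsmul_eq_mul]
        exact mul_le_mul_of_nonneg_right hcard (hφ k)
    _ = _ := mul_assoc _ _ _

lemma abs_digit_sub_le_one (x y : Fin 2) : |((x : ℕ) : ℝ) - (y : ℕ)| ≤ 1 := by
  fin_cases x <;> fin_cases y <;> simp

lemma abs_digit_sub_eq_one {x y : Fin 2} (h : x ≠ y) : |((x : ℕ) : ℝ) - (y : ℕ)| = 1 := by
  revert h
  fin_cases x <;> fin_cases y <;> simp

namespace IsCantorScale

variable {a q : ℝ} {c : ℕ → ℝ}

lemma ratio_pos (h : IsCantorScale c q) : 0 < q :=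
  pos_of_mul_pos_left ((h.pos 1).trans_le (h.succ_le 0)) (h.pos 0).le

lemma add_le (h : IsCantorScale c q) (k j : ℕ) : c (k + j) ≤ q ^ j * c k := by
  induction j with
  | zero => simp
  | succ j ih =>
    calc c (k + (j + 1)) ≤ q * c (k + j) := h.succ_le _
      _ ≤ q * (q ^ j * c k) := mul_le_mul_of_nonneg_left ih h.ratio_pos.le
      _ = q ^ (j + 1) * c k := by ring

lemma summable (h : IsCantorScale c q) : Summable c := by
  refine .of_nonneg_of_le (fun k ↦ (h.pos k).le) (fun k ↦ ?_)
    ((summable_geometric_of_lt_one h.ratio_pos.le (h.lt_half.trans one_half_lt_one)).mul_right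
      (c 0))
  simpa using h.add_le 0 k

lemma tsum_add_le (h : IsCantorScale c q) (k : ℕ) : ∑' j, c (j + k) ≤ c k / (1 - q) := by
  have hq := h.lt_half.trans one_half_lt_one
  calc ∑' j, c (j + k) ≤ ∑' j, q ^ j * c k :=
        ((summable_nat_add_iff k).2 h.summable).tsum_le_tsum
          (fun j ↦ by simpa only [add_comm] using h.add_le k j)
          ((summable_geometric_of_lt_one h.ratio_pos.le hq).mul_right (c k))
    _ = c k / (1 - q) := by
        rw [tsum_mul_right, tsum_geometric_of_lt_one h.ratio_pos.le hq, inv_mul_eq_div]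

lemma summable_digit_mul (h : IsCantorScale c q) (e : ℕ → Fin 2) :
    Summable fun k ↦ ((e k : ℕ) : ℝ) * c k := by
  refine .of_norm_bounded h.summable fun k ↦ ?_
  rw [norm_mul, Real.norm_of_nonneg (h.pos k).le]
  exact mul_le_of_le_one_left (h.pos k).le (by simpa using abs_digit_sub_le_one (e k) 0)

lemma cantorPoint_sub_cantorPoint (h : IsCantorScale c q) {e e' : ℕ → Fin 2} {k : ℕ}
    (he : e ∈ cylinder e' k) : cantorPoint a c e - cantorPoint a c e' =
      ∑' j, (((e (j + k) : ℕ) : ℝ) - (e' (j + k) : ℕ)) * c (j + k) := by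
  have hs := (h.summable_digit_mul e).sub (h.summable_digit_mul e')
  rw [cantorPoint, cantorPoint, add_sub_add_left_eq_sub,
    ← (h.summable_digit_mul e).tsum_sub (h.summable_digit_mul e'), ← hs.sum_add_tsum_nat_add k,
    Finset.sum_eq_zero fun i hi ↦ by rw [he i (Finset.mem_range.1 hi), sub_self], zero_add]
  simp only [sub_mul]

lemma norm_digit_sub_mul_le (h : IsCantorScale c q) (x y : Fin 2) (k : ℕ) :
    ‖(((x : ℕ) : ℝ) - (y : ℕ)) * c k‖ ≤ c k := by
  rw [norm_mul, Real.norm_of_nonneg (h.pos k).le]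
  exact mul_le_of_le_one_left (h.pos k).le (abs_digit_sub_le_one x y)

lemma abs_tsum_digit_sub_mul_le (h : IsCantorScale c q) (e e' : ℕ → Fin 2) (k : ℕ) :
    |∑' j, (((e (j + k) : ℕ) : ℝ) - (e' (j + k) : ℕ)) * c (j + k)| ≤ c k / (1 - q) :=
  (tsum_of_norm_bounded ((summable_nat_add_iff k).2 h.summable).hasSum
    fun j ↦ h.norm_digit_sub_mul_le _ _ (j + k)).trans (h.tsum_add_le k)

lemma abs_cantorPoint_sub_le (h : IsCantorScale c q) {e e' : ℕ → Fin 2} {k : ℕ}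
    (he : e ∈ cylinder e' k) : |cantorPoint a c e - cantorPoint a c e'| ≤ 2 * c k := by
  rw [h.cantorPoint_sub_cantorPoint he]
  refine (h.abs_tsum_digit_sub_mul_le e e' k).trans ?_
  rw [div_le_iff₀ (by linarith [h.lt_half])]
  nlinarith [h.pos k, h.lt_half]

lemma mul_le_abs_cantorPoint_sub (h : IsCantorScale c q) {e e' : ℕ → Fin 2} (he : e ≠ e') :
    (1 - 2 * q) * c (firstDiff e e') ≤ |cantorPoint a c e - cantorPoint a c e'| := by
  set k := firstDiff e e' with hk
  set r := fun j ↦ (((e j : ℕ) : ℝ) - (e' j : ℕ)) * c j with hr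
  have hsum : Summable r := .of_norm_bounded h.summable fun j ↦ h.norm_digit_sub_mul_le _ _ j
  have hhead : |r k| = c k := by
    rw [hr, abs_mul, abs_digit_sub_eq_one (apply_firstDiff_ne he), one_mul, abs_of_pos (h.pos k)]
  have htail : |∑' j, r (j + (k + 1))| ≤ 2 * q * c k := by
    refine (h.abs_tsum_digit_sub_mul_le e e' (k + 1)).trans ?_
    rw [div_le_iff₀ (by linarith [h.lt_half])]
    nlinarith [h.succ_le k, mul_pos h.ratio_pos (h.pos k), h.lt_half]
  have hsplit : cantorPoint a c e - cantorPoint a c e' = r k + ∑' j, r (j + (k + 1)) := by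
    rw [h.cantorPoint_sub_cantorPoint (mem_cylinder_firstDiff e e'),
      ((summable_nat_add_iff k).2 hsum).tsum_eq_zero_add]
    simp only [hr, hk, zero_add, add_assoc, add_comm 1]
  rw [hsplit]
  linarith [abs_sub_abs_le_abs_add (r k) (∑' j, r (j + (k + 1)))]

lemma injective_cantorPoint (h : IsCantorScale c q) :
    Function.Injective (cantorPoint a c) := fun e e' hee ↦ by
  by_contra hne
  have hsep := h.mul_le_abs_cantorPoint_sub (a := a) hne
  rw [hee, sub_self, abs_zero] at hsep
  nlinarith [h.pos (firstDiff e e'), h.lt_half]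

lemma continuous_cantorPoint (h : IsCantorScale c q) : Continuous (cantorPoint a c) := by
  refine continuous_const.add (continuous_tsum (fun k ↦ ?_) h.summable fun k e ↦ ?_)
  · exact (continuous_of_discreteTopology (f := fun x : Fin 2 ↦ ((x : ℕ) : ℝ))).comp
      (continuous_apply k) |>.mul continuous_const
  · simpa using h.norm_digit_sub_mul_le (e k) 0 k

lemma isCompact_binaryCantorSet (h : IsCantorScale c q) : IsCompact (binaryCantorSet a c) :=
  isCompact_range h.continuous_cantorPoint

lemma cantorPoint_mem_Icc (h : IsCantorScale c q) (e : ℕ → Fin 2) :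
    cantorPoint a c e ∈ Icc a (a + 2 * c 0) := by
  have hle := h.abs_cantorPoint_sub_le (a := a) (e := e) (e' := 0) (k := 0) (by simp)
  have hzero : cantorPoint a c 0 = a := by simp [cantorPoint]
  rw [hzero] at hle
  refine ⟨le_add_of_nonneg_right (tsum_nonneg fun k ↦ ?_), by linarith [(abs_le.1 hle).2]⟩
  exact mul_nonneg (Nat.cast_nonneg _) (h.pos k).le

lemma abs_cantorPoint_sub_cantorNode_le (h : IsCantorScale c q) (e : ℕ → Fin 2) (n : ℕ) :
    |cantorPoint a c e - cantorNode a c fun i : Fin n ↦ e i| ≤ 2 * c n :=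
  h.abs_cantorPoint_sub_le (mem_cylinder_padZero e n)

lemma abs_cantorNode_sub_init_le (h : IsCantorScale c q) {n : ℕ} (w : Fin (n + 1) → Fin 2) :
    |cantorNode a c w - cantorNode a c (Fin.init w)| ≤ 2 * c n := by
  rw [abs_sub_comm]
  exact h.abs_cantorPoint_sub_le (padZero_mem_cylinder_succ w)

lemma tendsto_cantorNode (h : IsCantorScale c q) (e : ℕ → Fin 2) :
    Tendsto (fun n ↦ cantorNode a c fun i : Fin n ↦ e i) atTop (𝓝 (cantorPoint a c e)) := by
  have hc := h.summable.tendsto_atTop_zero.const_mul 2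
  rw [mul_zero] at hc
  refine tendsto_iff_dist_tendsto_zero.2 (squeeze_zero (fun _ ↦ dist_nonneg) (fun n ↦ ?_) hc)
  rw [dist_comm]
  exact h.abs_cantorPoint_sub_cantorNode_le e n

end IsCantorScale

end BinaryCantorSet

section CantorDimension

open Filter Topology PiNat

namespace IsCantorScale

variable {a q g : ℝ} {c : ℕ → ℝ}

lemma exists_abs_ofDigits_sub_le (h : IsCantorScale c q) (hg : 0 < g)
    (hc : (fun k ↦ (1 / 2 : ℝ) ^ k) =O[atTop] fun k ↦ c k ^ g) :
    ∃ K : NNReal, ∀ e e', |Real.ofDigits e - Real.ofDigits e'| ≤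
      K * |cantorPoint a c e - cantorPoint a c e'| ^ g := by
  obtain ⟨C, hC₀, hC⟩ := Asymptotics.bound_of_isBigO_nat_atTop hc
  have hq : 0 < 1 - 2 * q := by linarith [h.lt_half]
  refine ⟨⟨C / (1 - 2 * q) ^ g, by positivity⟩, fun e e' ↦ ?_⟩
  rcases eq_or_ne e e' with rfl | hne
  · simp [Real.zero_rpow hg.ne']
  set k := firstDiff e e'
  have hk := hC (x := k) (Real.rpow_pos_of_pos (h.pos k) g).ne'
  rw [Real.norm_of_nonneg (by positivity),
    Real.norm_of_nonneg (Real.rpow_nonneg (h.pos k).le g)] at hk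
  calc |Real.ofDigits e - Real.ofDigits e'| ≤ (1 / 2) ^ k := by
        simpa using Real.abs_ofDigits_sub_ofDigits_le (mem_cylinder_firstDiff e e')
    _ ≤ C * c k ^ g := hk
    _ = C / (1 - 2 * q) ^ g * ((1 - 2 * q) * c k) ^ g := by
        rw [Real.mul_rpow hq.le (h.pos k).le]
        field_simp
    _ ≤ C / (1 - 2 * q) ^ g * |cantorPoint a c e - cantorPoint a c e'| ^ g := by
        gcongr
        · exact (mul_pos hq (h.pos k)).le
        · exact h.mul_le_abs_cantorPoint_sub hne

lemma le_dimH_binaryCantorSet (h : IsCantorScale c q) (hg : 0 < g)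
    (hc : (fun k ↦ (1 / 2 : ℝ) ^ k) =O[atTop] fun k ↦ c k ^ g) :
    ENNReal.ofReal g ≤ dimH (binaryCantorSet a c) := by
  obtain ⟨K, hK⟩ := h.exists_abs_ofDigits_sub_le (a := a) hg hc
  set F : ℝ → ℝ := fun x ↦ Real.ofDigits (Function.invFun (cantorPoint a c) x)
  have hF (e) : F (cantorPoint a c e) = Real.ofDigits e := by
    simp only [F, Function.leftInverse_invFun h.injective_cantorPoint e]
  have hsurj : Icc 0 1 ⊆ F '' binaryCantorSet a c := fun x hx ↦ by
    obtain ⟨e, -, rfl⟩ := Real.ofDigits_SurjOn one_lt_two hx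
    exact ⟨_, mem_range_self e, hF e⟩
  have hholder : HolderOnWith K g.toNNReal F (binaryCantorSet a c) := by
    rintro _ ⟨e, rfl⟩ _ ⟨e', rfl⟩
    rw [hF, hF, edist_dist, edist_dist, ENNReal.ofReal_rpow_of_nonneg dist_nonneg (by simp),
      ← ENNReal.ofReal_coe_nnreal, ← ENNReal.ofReal_mul K.coe_nonneg, Real.coe_toNNReal g hg.le]
    exact ENNReal.ofReal_le_ofReal (hK e e')
  have hdim : dimH (Icc (0 : ℝ) 1) = 1 := by
    simpa using Real.dimH_of_nonempty_interior (E := ℝ) (s := Icc (0 : ℝ) 1) (by simp)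
  have hle := hdim ▸ (dimH_mono hsurj).trans (hholder.dimH_image_le (by simpa using hg))
  rwa [ENNReal.le_div_iff_mul_le (by simp [hg]) (by simp), one_mul] at hle

lemma hausdorffMeasure_binaryCantorSet_ne_top (h : IsCantorScale c q)
    (hc : (fun k ↦ c k ^ g) =O[atTop] fun k ↦ (1 / 2 : ℝ) ^ k) :
    μH[g] (binaryCantorSet a c) ≠ ∞ := by
  obtain ⟨C, -, hC⟩ := Asymptotics.bound_of_isBigO_nat_atTop hc
  set t : ∀ n : ℕ, (Fin n → Fin 2) → Set ℝ := fun n w ↦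
    Metric.closedBall (cantorNode a c w) (2 * c n)
  have hdiam (n w) : Metric.ediam (t n w) = ENNReal.ofReal (4 * c n) := by
    simp only [t, Real.closedBall_eq_Icc, Real.ediam_Icc]
    congr 1
    ring
  have hcover (n) : binaryCantorSet a c ⊆ ⋃ w, t n w := by
    rintro _ ⟨e, rfl⟩
    exact mem_iUnion.2 ⟨fun i ↦ e i, h.abs_cantorPoint_sub_cantorNode_le e n⟩
  have hvanish : Tendsto (fun n ↦ ENNReal.ofReal (4 * c n)) atTop (𝓝 0) := by
    simpa using ENNReal.tendsto_ofReal (h.summable.tendsto_atTop_zero.const_mul 4)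
  have hsum (n : ℕ) : ∑ w, Metric.ediam (t n w) ^ g ≤ ENNReal.ofReal (4 ^ g * C) := by
    have hn := hC (x := n) (by positivity)
    rw [Real.norm_of_nonneg (Real.rpow_nonneg (h.pos n).le g),
      Real.norm_of_nonneg (by positivity)] at hn
    have hn' : (2 : ℝ) ^ n * c n ^ g ≤ C := by
      rwa [one_div, inv_pow, ← div_eq_mul_inv, le_div_iff₀' (by positivity)] at hn
    calc ∑ w, Metric.ediam (t n w) ^ g = ENNReal.ofReal (4 ^ g * (2 ^ n * c n ^ g)) := by
          simp only [hdiam, ENNReal.ofReal_rpow_of_pos (mul_pos four_pos (h.pos n)),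
            Real.mul_rpow four_pos.le (h.pos n).le, Finset.sum_const]
          rw [mul_left_comm, ← ENNReal.ofReal_nsmul]
          simp
      _ ≤ ENNReal.ofReal (4 ^ g * C) := by gcongr
  have hle := Measure.hausdorffMeasure_le_liminf_sum g (binaryCantorSet a c) _ hvanish t
    (.of_forall fun n w ↦ (hdiam n w).le) (.of_forall hcover)
  refine ((hle.trans (liminf_le_liminf (.of_forall hsum))).trans_lt ?_).ne
  simp

lemma dimH_binaryCantorSet_le (h : IsCantorScale c q) (hg : 0 < g)
    (hc : (fun k ↦ c k ^ g) =O[atTop] fun k ↦ (1 / 2 : ℝ) ^ k) :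
    dimH (binaryCantorSet a c) ≤ ENNReal.ofReal g :=
  dimH_le_of_hausdorffMeasure_ne_top (d := g.toNNReal) <| by
    rw [Real.coe_toNNReal g hg.le]
    exact h.hausdorffMeasure_binaryCantorSet_ne_top hc

lemma dimH_binaryCantorSet (h : IsCantorScale c q) (hg : 0 < g)
    (hc : Tendsto (fun k ↦ Real.log (c k) / k) atTop (𝓝 (-(Real.log 2 / g)))) :
    dimH (binaryCantorSet a c) = ENNReal.ofReal g := by
  have hpow_half (k : ℕ) : (1 / 2 : ℝ) ^ k = Real.exp (-(Real.log 2 * k)) := by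
    rw [mul_comm, ← mul_neg, ← Real.log_inv, ← Real.log_pow, Real.exp_log (by positivity), one_div]
  have hpow (x : ℝ) (k : ℕ) : c k ^ x = Real.exp (Real.log (c k) * x) :=
    Real.rpow_def_of_pos (h.pos k) x
  have hnorm (x : ℝ) (k : ℕ) : ‖c k ^ x‖ = c k ^ x :=
    Real.norm_of_nonneg (Real.rpow_nonneg (h.pos k).le x)
  have hlim : Tendsto ENNReal.ofReal (𝓝 g) (𝓝 (ENNReal.ofReal g)) :=
    ENNReal.continuous_ofReal.tendsto g
  have : 0 < Real.log 2 := Real.log_pos one_lt_two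
  apply le_antisymm
  · refine ge_of_tendsto (hlim.mono_left (nhdsWithin_le_nhds (s := Ioi g))) ?_
    filter_upwards [self_mem_nhdsWithin] with x (hx : g < x)
    have hx₀ := hg.trans hx
    refine h.dimH_binaryCantorSet_le hx₀ (.of_bound' ?_)
    have hx' : -(Real.log 2 / g) < -(Real.log 2 / x) := by gcongr
    filter_upwards [hc.eventually_lt_const hx', eventually_gt_atTop 0] with k hk hk₀
    rw [hnorm, Real.norm_of_nonneg (by positivity), hpow, hpow_half, Real.exp_le_exp]
    rw [← neg_div, lt_div_iff₀ hx₀, div_mul_eq_mul_div, div_lt_iff₀ (by positivity)] at hk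
    linarith
  · refine le_of_tendsto (hlim.mono_left (nhdsWithin_le_nhds (s := Iio g))) ?_
    filter_upwards [Ioo_mem_nhdsLT hg] with x ⟨hx₀, hx⟩
    refine h.le_dimH_binaryCantorSet hx₀ (.of_bound' ?_)
    have hx' : -(Real.log 2 / x) < -(Real.log 2 / g) := by gcongr
    filter_upwards [hc.eventually_const_lt hx', eventually_gt_atTop 0] with k hk hk₀
    rw [hnorm, Real.norm_of_nonneg (by positivity), hpow, hpow_half, Real.exp_le_exp]
    rw [← neg_div, div_lt_iff₀ hx₀, div_mul_eq_mul_div, lt_div_iff₀ (by positivity)] at hk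
    linarith

end IsCantorScale

end CantorDimension

section PolyScale

open Filter Topology

/-- The scale with `2 ^ k * c k ^ g` proportional to `(1 + δ * k) ^ p`, normalised so that the
associated Cantor set has diameter at most `L`. Up to the polynomial correction it is the scale of
the self-similar Cantor set of dimension `g`. -/
noncomputable def polyScale (g L δ p : ℝ) (k : ℕ) : ℝ :=
  L / 2 * ((1 / 2) ^ k * (1 + δ * k) ^ p) ^ (1 / g)

variable {g L δ : ℝ}

lemma two_mul_polyScale_zero (p : ℝ) : 2 * polyScale g L δ p 0 = L := by
  simp [polyScale, mul_div_cancel₀]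

lemma two_pow_mul_polyScale_rpow (hg : g ≠ 0) (hL : 0 ≤ L) (hδ : 0 ≤ δ) (p : ℝ) (k : ℕ) :
    2 ^ k * polyScale g L δ p k ^ g = (L / 2) ^ g * (1 + δ * k) ^ p := by
  rw [polyScale, Real.mul_rpow (by positivity) (by positivity), ← Real.rpow_mul (by positivity),
    one_div_mul_cancel hg, Real.rpow_one, one_div, inv_pow]
  field_simp

lemma polyScale_pos (hL : 0 < L) (hδ : 0 ≤ δ) (p : ℝ) (k : ℕ) : 0 < polyScale g L δ p k := by
  unfold polyScale
  positivity

lemma one_add_mul_succ_rpow_le (hδ : 0 ≤ δ) (p : ℝ) (k : ℕ) :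
    (1 + δ * (k + 1 : ℕ)) ^ p ≤ (1 + δ) ^ |p| * (1 + δ * k) ^ p := by
  have hmono : 1 + δ * k ≤ 1 + δ * (k + 1 : ℕ) := by
    push_cast
    linarith
  have hratio : 1 + δ * (k + 1 : ℕ) ≤ (1 + δ) * (1 + δ * k) := by
    push_cast
    nlinarith [mul_nonneg (mul_nonneg hδ hδ) k.cast_nonneg]
  rcases le_total 0 p with hp | hp
  · rw [abs_of_nonneg hp, ← Real.mul_rpow (by positivity) (by positivity)]
    exact Real.rpow_le_rpow (by positivity) hratio hp
  · refine (Real.rpow_le_rpow_of_nonpos (by positivity) hmono hp).trans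
      (le_mul_of_one_le_left (by positivity) (Real.one_le_rpow (by linarith) (abs_nonneg p)))

lemma isCantorScale_polyScale (hg : 0 < g) (hL : 0 < L) (hδ : 0 ≤ δ) {p : ℝ}
    (hδp : 1 / 2 * (1 + δ) ^ |p| < (1 / 2) ^ g) :
    IsCantorScale (polyScale g L δ p) ((1 / 2 * (1 + δ) ^ |p|) ^ (1 / g)) where
  pos := polyScale_pos hL hδ p
  lt_half := by
    calc (1 / 2 * (1 + δ) ^ |p|) ^ (1 / g) < ((1 / 2 : ℝ) ^ g) ^ (1 / g) :=
          Real.rpow_lt_rpow (by positivity) hδp (by positivity)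
      _ = 1 / 2 := by rw [one_div g, Real.rpow_rpow_inv (by norm_num) hg.ne']
  succ_le k := by
    rw [polyScale, polyScale, mul_left_comm, ← Real.mul_rpow (by positivity) (by positivity)]
    gcongr L / 2 * ?_ ^ (1 / g)
    calc (1 / 2 : ℝ) ^ (k + 1) * (1 + δ * (k + 1 : ℕ)) ^ p ≤
          (1 / 2) ^ (k + 1) * ((1 + δ) ^ |p| * (1 + δ * k) ^ p) := by
          gcongr
          exact one_add_mul_succ_rpow_le hδ p k
      _ = 1 / 2 * (1 + δ) ^ |p| * ((1 / 2) ^ k * (1 + δ * k) ^ p) := by ring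

lemma exists_isCantorScale_polyScale (hg : g ∈ Ioo (0 : ℝ) 1) (hL : 0 < L) (p : ℝ) :
    ∃ δ ∈ Ioc (0 : ℝ) 1, ∃ q, IsCantorScale (polyScale g L δ p) q := by
  have hlim : Tendsto (fun δ : ℝ ↦ 1 / 2 * (1 + δ) ^ |p|) (𝓝[>] 0) (𝓝 (1 / 2 * (1 + 0) ^ |p|)) :=
    (((continuous_const.add continuous_id).rpow_const fun _ ↦ .inr (abs_nonneg p)).const_mul
      (1 / 2)).tendsto 0 |>.mono_left nhdsWithin_le_nhds
  have hlt : 1 / 2 * (1 + 0 : ℝ) ^ |p| < (1 / 2) ^ g := by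
    simpa using Real.rpow_lt_rpow_of_exponent_gt (x := (1 / 2 : ℝ)) (by norm_num) (by norm_num) hg.2
  obtain ⟨δ, hδp, hδ⟩ := ((hlim.eventually_lt_const hlt).and (Ioc_mem_nhdsGT one_pos)).exists
  exact ⟨δ, hδ, _, isCantorScale_polyScale hg.1 hL hδ.1.le hδp⟩

lemma tendsto_log_polyScale_div (hL : 0 < L) (hδ : 0 < δ) (p : ℝ) :
    Tendsto (fun k ↦ Real.log (polyScale g L δ p k) / k) atTop (𝓝 (-(Real.log 2 / g))) := by
  have hconst : Tendsto (fun k : ℕ ↦ Real.log (L / 2) / k) atTop (𝓝 0) :=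
    tendsto_const_div_atTop_nhds_zero_nat _
  have hpoly : Tendsto (fun k : ℕ ↦ Real.log (1 + δ * k) / k) atTop (𝓝 0) := by
    have hlin : Tendsto (fun k : ℕ ↦ 1 + δ * k) atTop atTop :=
      tendsto_atTop_add_const_left _ _ (tendsto_natCast_atTop_atTop.const_mul_atTop hδ)
    refine ((Real.tendsto_pow_log_div_mul_add_atTop δ⁻¹ (-δ⁻¹) 1 (by positivity)).comp hlin).congr
      fun k ↦ ?_
    simp only [Function.comp_apply, pow_one]
    congr 1
    field_simp
    ring
  have hsum := hconst.add (((hpoly.const_mul p).sub_const (Real.log 2)).div_const g)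
  simp only [mul_zero, zero_sub, zero_add, neg_div] at hsum
  refine hsum.congr' ?_
  filter_upwards [eventually_gt_atTop 0] with k hk
  have hk' : (k : ℝ) ≠ 0 := by positivity
  rw [polyScale, Real.log_mul (by positivity) (by positivity), Real.log_rpow (by positivity),
    Real.log_mul (by positivity) (by positivity), Real.log_rpow (by positivity), Real.log_pow,
    one_div (2 : ℝ), Real.log_inv]
  field_simp
  ring

lemma dimH_binaryCantorSet_polyScale {a q p : ℝ} (h : IsCantorScale (polyScale g L δ p) q)
    (hg : 0 < g) (hL : 0 < L) (hδ : 0 < δ) :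
    dimH (binaryCantorSet a (polyScale g L δ p)) = ENNReal.ofReal g :=
  h.dimH_binaryCantorSet hg (tendsto_log_polyScale_div hL hδ p)

lemma binaryCantorSet_polyScale_subset_Icc {a q p : ℝ} (h : IsCantorScale (polyScale g L δ p) q) :
    binaryCantorSet a (polyScale g L δ p) ⊆ Icc a (a + L) := by
  rintro _ ⟨e, rfl⟩
  simpa [two_mul_polyScale_zero] using h.cantorPoint_mem_Icc e

lemma summable_one_add_mul_rpow_mul_pow (hδ : δ ∈ Ioc (0 : ℝ) 1) (m : ℕ) :
    Summable fun k : ℕ ↦ (1 + δ * k) ^ (-(m + 2 : ℝ)) * (k + 1 : ℝ) ^ m := by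
  have hδ₀ := hδ.1
  refine .of_nonneg_of_le (fun k ↦ by positivity) (fun k ↦ ?_)
    ((Real.summable_one_div_nat_add_rpow 1 2 |>.2 one_lt_two).mul_left (δ ^ (-(m + 2 : ℝ))))
  have hle : δ * (k + 1) ≤ 1 + δ * k := by linarith [hδ.2]
  calc (1 + δ * k) ^ (-(m + 2 : ℝ)) * (k + 1 : ℝ) ^ m ≤
        (δ * (k + 1)) ^ (-(m + 2 : ℝ)) * (k + 1) ^ m := by
        gcongr ?_ * _
        exact Real.rpow_le_rpow_of_nonpos (by positivity) hle (neg_nonpos.2 (by positivity))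
    _ = δ ^ (-(m + 2 : ℝ)) * (1 / |(k : ℝ) + 1| ^ (2 : ℝ)) := by
        rw [Real.mul_rpow hδ₀.le (by positivity), abs_of_pos (by positivity), neg_add,
          Real.rpow_add (x := (k : ℝ) + 1) (by positivity), Real.rpow_neg (by positivity),
          Real.rpow_neg (by positivity), Real.rpow_natCast]
        field_simp

lemma summable_two_pow_mul_polyScale_rpow_mul_pow (hg : g ≠ 0) (hL : 0 ≤ L)
    (hδ : δ ∈ Ioc (0 : ℝ) 1) (m : ℕ) :
    Summable fun k ↦ 2 ^ k * polyScale g L δ (-(m + 2)) k ^ g * (k + 1 : ℝ) ^ m := by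
  simp only [two_pow_mul_polyScale_rpow hg hL hδ.1.le, mul_assoc]
  exact (summable_one_add_mul_rpow_mul_pow hδ m).mul_left _

lemma summable_inv_two_pow_mul_polyScale_rpow (hg : g ≠ 0) (hL : 0 ≤ L)
    (hδ : δ ∈ Ioc (0 : ℝ) 1) : Summable fun k ↦ (2 ^ k * polyScale g L δ 2 k ^ g)⁻¹ := by
  have hδ₀ := hδ.1
  simp only [two_pow_mul_polyScale_rpow hg hL hδ₀.le, mul_inv]
  refine .mul_left _ ((summable_one_add_mul_rpow_mul_pow hδ 0).congr fun k ↦ ?_)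
  rw [Nat.cast_zero, zero_add, Real.rpow_neg (by positivity), pow_zero, mul_one]

end PolyScale

section PolarCantorSets

open Filter Topology

namespace IsCantorScale

variable {a q H : ℝ} {c : ℕ → ℝ}

lemma rpow_mul_le (h : IsCantorScale c q) (hH : 0 ≤ H) (k j : ℕ) :
    c (k + j) ^ H * (k + j + 1) ≤ (j + 1) * (q ^ H) ^ j * (c k ^ H * (k + 1)) := by
  have hpoly : (k + j + 1 : ℝ) ≤ (j + 1) * (k + 1) := by
    nlinarith [mul_nonneg (k.cast_nonneg (α := ℝ)) j.cast_nonneg]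
  calc c (k + j) ^ H * (k + j + 1) ≤ (q ^ j * c k) ^ H * ((j + 1) * (k + 1)) := by
        have hle := Real.rpow_le_rpow (h.pos (k + j)).le (h.add_le k j) hH
        exact mul_le_mul hle hpoly (by positivity)
          ((Real.rpow_nonneg (h.pos _).le H).trans hle)
    _ = (j + 1) * (q ^ H) ^ j * (c k ^ H * (k + 1)) := by
        rw [Real.mul_rpow (pow_nonneg h.ratio_pos.le j) (h.pos k).le, Real.rpow_pow_comm
          h.ratio_pos.le]
        ring

lemma exists_tsum_rpow_mul_le (h : IsCantorScale c q) (hH : 0 < H) :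
    ∃ W > 0, ∀ k : ℕ, Summable (fun j : ℕ ↦ c (k + j) ^ H * (k + j + 1)) ∧
      ∑' j : ℕ, c (k + j) ^ H * (k + j + 1) ≤ W * (c k ^ H * (k + 1)) := by
  have hq : q ^ H < 1 :=
    Real.rpow_lt_one h.ratio_pos.le (h.lt_half.trans one_half_lt_one) hH
  have hq₀ : 0 < q ^ H := Real.rpow_pos_of_pos h.ratio_pos H
  have hgeom : Summable fun j : ℕ ↦ (j + 1 : ℝ) * (q ^ H) ^ j := by
    simpa using summable_choose_mul_geometric_of_norm_lt_one 1
      (by rwa [Real.norm_of_nonneg hq₀.le] : ‖q ^ H‖ < 1)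
  refine ⟨∑' j : ℕ, (j + 1) * (q ^ H) ^ j, hgeom.tsum_pos (fun j ↦ by positivity) 0 (by simp),
    fun k ↦ ?_⟩
  have hsum : Summable fun j : ℕ ↦ c (k + j) ^ H * (k + j + 1) :=
    .of_nonneg_of_le (fun j ↦ mul_nonneg (Real.rpow_nonneg (h.pos _).le H) (by positivity))
      (h.rpow_mul_le hH.le k) (hgeom.mul_right _)
  refine ⟨hsum, ?_⟩
  rw [← tsum_mul_right]
  exact hsum.tsum_le_tsum (h.rpow_mul_le hH.le k) (hgeom.mul_right _)

lemma abs_sub_cantorNode_le_tsum (h : IsCantorScale c q) {g : ℝ → ℝ}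
    (hg : ContinuousOn g (binaryCantorSet a c)) {ρ : ℕ → ℝ} {k : ℕ}
    (hsum : Summable fun j ↦ ρ (k + j))
    (hρ : ∀ j ≥ k, ∀ w : Fin (j + 1) → Fin 2,
      |g (cantorNode a c w) - g (cantorNode a c (Fin.init w))| ≤ ρ j) (e : ℕ → Fin 2) :
    |g (cantorNode a c fun i : Fin k ↦ e i) - g (cantorPoint a c e)| ≤ ∑' j, ρ (k + j) := by
  have hlim : Tendsto (fun n ↦ g (cantorNode a c fun i : Fin n ↦ e i)) atTop
      (𝓝 (g (cantorPoint a c e))) :=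
    (hg _ (mem_range_self e)).tendsto.comp (tendsto_nhdsWithin_iff.2
      ⟨h.tendsto_cantorNode e, .of_forall fun _ ↦ cantorNode_mem_binaryCantorSet a c _⟩)
  rw [← Real.dist_eq]
  refine dist_le_tsum_of_dist_le_of_tendsto₀ _ (fun j ↦ ?_) hsum
    (hlim.comp (tendsto_atTop_mono (Nat.le_add_left · k) tendsto_id))
  rw [dist_comm]
  exact hρ (k + j) (Nat.le_add_right k j) fun i ↦ e i

end IsCantorScale

namespace HolderWithExp

variable {E : Type*} [NormedAddCommGroup E] {f : ℝ → E} {γ : ℝ} {s : Set ℝ}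

lemma exists_nonneg (hf : HolderWithExp f γ s) :
    ∃ K ≥ 0, ∀ x ∈ s, ∀ y ∈ s, ‖f x - f y‖ ≤ K * |x - y| ^ γ := by
  obtain ⟨K, hK⟩ := hf
  refine ⟨|K|, abs_nonneg K, fun x hx y hy ↦ (hK x hx y hy).trans ?_⟩
  gcongr
  exact le_abs_self K

lemma continuousOn (hf : HolderWithExp f γ s) (hγ : 0 < γ) : ContinuousOn f s := fun y hy ↦ by
  obtain ⟨K, hK⟩ := hf
  have hlim : Tendsto (fun x ↦ K * |x - y| ^ γ) (𝓝[s] y) (𝓝 (K * |y - y| ^ γ)) :=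
    (continuous_const.mul ((continuous_id.sub continuous_const).abs.rpow_const
      fun _ ↦ .inr hγ.le)).continuousWithinAt
  rw [sub_self, abs_zero, Real.zero_rpow hγ.ne', mul_zero] at hlim
  refine tendsto_iff_norm_sub_tendsto_zero.2 (squeeze_zero' (.of_forall fun _ ↦ norm_nonneg _) ?_
    hlim)
  filter_upwards [self_mem_nhdsWithin] with x hx using hK x hx y hy

end HolderWithExp

namespace IsFBM

variable {Ω : Type*} [MeasurableSpace Ω] {P : Measure Ω} {H : ℝ} {d : ℕ}
  {B : Ω → ℝ → EuclideanSpace ℝ (Fin d)} {a q : ℝ} {c : ℕ → ℝ}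

lemma continuousOn_coord (hB : IsFBM P H d B) (ω : Ω) (i : Fin d) :
    ContinuousOn (fun t ↦ B ω t i) (Icc 0 1) :=
  (PiLp.continuous_apply 2 _ i).comp_continuousOn (hB.cont ω)

variable [IsProbabilityMeasure P]

lemma measureReal_le_abs_cantorNode_increment_le (hB : IsFBM P H d B) (hH : 0 < H)
    (h : IsCantorScale c q) (hsub : binaryCantorSet a c ⊆ Icc 0 1) {j : ℕ}
    (w : Fin (j + 1) → Fin 2) (i : Fin d) :
    P.real {ω | 2 * (2 * c j) ^ H * (j + 1) ≤
      |B ω (cantorNode a c w) i - B ω (cantorNode a c (Fin.init w)) i|} ≤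
        2 * Real.exp (-2) ^ (j + 1) := by
  have hδ : 0 < 2 * c j := mul_pos two_pos (h.pos j)
  have : 0 < (2 * c j) ^ H := Real.rpow_pos_of_pos hδ H
  refine (hB.measureReal_le_abs_increment_le hH
    (hsub (cantorNode_mem_binaryCantorSet a c _)) (hsub (cantorNode_mem_binaryCantorSet a c w))
    (h.abs_cantorNode_sub_init_le w) (by positivity) i).trans ?_
  rw [rpow_two_mul_eq_sq hδ.le, ← Real.exp_nat_mul]
  gcongr 2 * Real.exp ?_
  rw [div_le_iff₀ (by positivity)]
  push_cast
  nlinarith [mul_nonneg (sq_nonneg ((2 * c j) ^ H)) (mul_nonneg j.cast_nonneg (α := ℝ)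
    (by positivity : (0 : ℝ) ≤ j + 1))]

lemma ae_eventually_abs_cantorNode_increment_lt (hB : IsFBM P H d B) (hH : 0 < H)
    (h : IsCantorScale c q) (hsub : binaryCantorSet a c ⊆ Icc 0 1) :
    ∀ᵐ ω ∂P, ∀ᶠ j : ℕ in atTop, ∀ (w : Fin (j + 1) → Fin 2) (i : Fin d),
      |B ω (cantorNode a c w) i - B ω (cantorNode a c (Fin.init w)) i| <
        2 * (2 * c j) ^ H * (j + 1) := by
  have hexp : 2 * Real.exp (-2) < 1 := by
    rw [Real.exp_neg, ← div_eq_mul_inv, div_lt_one (Real.exp_pos 2)]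
    linarith [Real.add_one_lt_exp two_ne_zero]
  have hsum : Summable fun j : ℕ ↦ d * 2 * (2 * Real.exp (-2)) ^ (j + 1) :=
    ((summable_nat_add_iff 1).2 (summable_geometric_of_lt_one (by positivity) hexp)).mul_left _
  have hae := ae_eventually_forall_notMem_of_summable (μ := P)
    (A := fun j (p : (Fin (j + 1) → Fin 2) × Fin d) ↦ {ω | 2 * (2 * c j) ^ H * (j + 1) ≤
      |B ω (cantorNode a c p.1) p.2 - B ω (cantorNode a c (Fin.init p.1)) p.2|}) hsum
    fun j ↦ by
      refine (Finset.sum_le_sum fun p _ ↦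
        hB.measureReal_le_abs_cantorNode_increment_le hH h hsub p.1 p.2).trans_eq ?_
      simp only [Finset.sum_const, Finset.card_univ, Fintype.card_prod, Fintype.card_pi_const,
        Fintype.card_fin, nsmul_eq_mul, Nat.cast_mul, Nat.cast_pow, Nat.cast_ofNat, mul_pow]
      ring
  filter_upwards [hae] with ω hω
  filter_upwards [hω] with j hj w i
  exact not_le.1 (hj (w, i))

lemma ae_eventually_forall_notMem_cubeEvent (hB : IsFBM P H d B) (hH : 0 < H) (ha : 0 < a)
    (h : IsCantorScale c q) (hsub : binaryCantorSet a c ⊆ Icc a 1)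
    (hsum : Summable fun k ↦ 2 ^ k * c k ^ (H * d) * (k + 1 : ℝ) ^ d)
    (y : ∀ k, (Fin k → Fin 2) → EuclideanSpace ℝ (Fin d)) {R : ℝ} (hR : 0 ≤ R) :
    ∀ᵐ ω ∂P, ∀ᶠ k in atTop, ∀ w : Fin k → Fin 2,
      ω ∉ cubeEvent B (cantorNode a c w) (y k w) (R * (c k ^ H * (k + 1))) := by
  obtain ⟨C, -, hC⟩ := hB.exists_measureReal_cubeEvent_le hH ha
  refine ae_eventually_forall_notMem_of_summable (hsum.mul_left (C * R ^ d)) fun k ↦ ?_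
  have hε : 0 ≤ R * (c k ^ H * (k + 1)) :=
    mul_nonneg hR (mul_nonneg (Real.rpow_nonneg (h.pos k).le H) (by positivity))
  refine (Finset.sum_le_sum fun w _ ↦
    hC _ (hsub (cantorNode_mem_binaryCantorSet a c w)) (y k w) _ hε).trans_eq ?_
  simp only [Finset.sum_const, Finset.card_univ, Fintype.card_pi_const, Fintype.card_fin,
    nsmul_eq_mul, Nat.cast_pow, Nat.cast_ofNat, mul_pow, Real.rpow_mul_natCast (h.pos k).le]
  ring

lemma exists_ae_eventually_abs_sub_cantorNode_le (hB : IsFBM P H d B) (hH : 0 < H)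
    (h : IsCantorScale c q) (hsub : binaryCantorSet a c ⊆ Icc 0 1) :
    ∃ M ≥ 0, ∀ᵐ ω ∂P, ∀ᶠ k : ℕ in atTop, ∀ (e : ℕ → Fin 2) (i : Fin d),
      |B ω (cantorNode a c fun j : Fin k ↦ e j) i - B ω (cantorPoint a c e) i| ≤
        M * (c k ^ H * (k + 1)) := by
  obtain ⟨W, hW₀, hW⟩ := h.exists_tsum_rpow_mul_le hH
  refine ⟨2 * 2 ^ H * W, by positivity, ?_⟩
  filter_upwards [hB.ae_eventually_abs_cantorNode_increment_lt hH h hsub] with ω hω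
  obtain ⟨N, hN⟩ := eventually_atTop.1 hω
  filter_upwards [eventually_ge_atTop N] with k hk e i
  obtain ⟨hsum, htail⟩ := hW k
  have hscale (j : ℕ) : 2 * (2 * c j) ^ H * (j + 1) = 2 * 2 ^ H * (c j ^ H * (j + 1)) := by
    rw [Real.mul_rpow two_pos.le (h.pos j).le]
    ring
  calc _ ≤ ∑' j, 2 * 2 ^ H * (c (k + j) ^ H * ((k + j : ℕ) + 1)) := by
        refine h.abs_sub_cantorNode_le_tsum ((hB.continuousOn_coord ω i).mono hsub)
          (ρ := fun j ↦ 2 * 2 ^ H * (c j ^ H * (j + 1))) ?_ (fun j hj w ↦ ?_) e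
        · push_cast
          exact hsum.mul_left _
        · rw [← hscale]
          exact (hN j (hk.trans hj) w i).le
    _ ≤ 2 * 2 ^ H * W * (c k ^ H * (k + 1)) := by
        push_cast
        rw [tsum_mul_left, mul_assoc _ W]
        gcongr

theorem measure_exists_binaryCantorSet_eq_zero (hB : IsFBM P H d B) (hH : 0 < H) (ha : 0 < a)
    (h : IsCantorScale c q) (hsub : binaryCantorSet a c ⊆ Icc a 1)
    (hsum : Summable fun k ↦ 2 ^ k * c k ^ (H * d) * (k + 1 : ℝ) ^ d)
    {f : ℝ → EuclideanSpace ℝ (Fin d)} (hf : HolderWithExp f H (Icc 0 1))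
    (x : EuclideanSpace ℝ (Fin d)) :
    P {ω | ∃ s ∈ binaryCantorSet a c, B ω s + f s = x} = 0 := by
  have hsub₀ : binaryCantorSet a c ⊆ Icc 0 1 := hsub.trans (Icc_subset_Icc_left ha.le)
  obtain ⟨K, hK₀, hK⟩ := hf.exists_nonneg
  obtain ⟨M, hM₀, hM⟩ := hB.exists_ae_eventually_abs_sub_cantorNode_le hH h hsub₀
  have hfar := hB.ae_eventually_forall_notMem_cubeEvent hH ha h hsub hsum
    (fun k w ↦ x - f (cantorNode a c w)) (R := M + K * 2 ^ H) (by positivity)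
  have hdrift (e : ℕ → Fin 2) (k : ℕ) (i : Fin d) :
      |f (cantorNode a c fun j : Fin k ↦ e j) i - f (cantorPoint a c e) i| ≤
        K * 2 ^ H * (c k ^ H * (k + 1)) := by
    have hc : 0 ≤ c k ^ H := Real.rpow_nonneg (h.pos k).le H
    calc _ ≤ ‖f (cantorNode a c fun j : Fin k ↦ e j) - f (cantorPoint a c e)‖ :=
          PiLp.norm_apply_le (_ - _) i
      _ ≤ K * (2 * c k) ^ H := by
          refine (hK _ (hsub₀ (cantorNode_mem_binaryCantorSet a c _)) _
            (hsub₀ (mem_range_self e))).trans ?_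
          gcongr
          rw [abs_sub_comm]
          exact h.abs_cantorPoint_sub_cantorNode_le e k
      _ ≤ K * 2 ^ H * (c k ^ H * (k + 1)) := by
          rw [Real.mul_rpow two_pos.le (h.pos k).le, ← mul_assoc]
          gcongr
          exact le_mul_of_one_le_right hc (by simp)
  refine measure_eq_zero_iff_ae_notMem.2 ?_
  filter_upwards [hM, hfar] with ω hosc hfarω
  rintro ⟨_, ⟨e, rfl⟩, rfl⟩
  obtain ⟨k, hosck, hfark⟩ := (hosc.and hfarω).exists
  refine hfark (fun j ↦ e j) fun i ↦ ?_
  rw [mem_closedBall_iff_norm, PiLp.sub_apply, PiLp.add_apply, Real.norm_eq_abs, add_mul]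
  calc _ = |(B ω (cantorNode a c fun j : Fin k ↦ e j) i - B ω (cantorPoint a c e) i) +
        (f (cantorNode a c fun j : Fin k ↦ e j) i - f (cantorPoint a c e) i)| := by
        congr 1
        ring
    _ ≤ _ := (abs_add_le _ _).trans (by gcongr; exacts [hosck e i, hdrift e k i])

end IsFBM

end PolarCantorSets

section NonpolarCantorSets

open Filter Topology PiNat

lemma mem_image_of_frequently_dist_le {α E : Type*} [TopologicalSpace α] [MetricSpace E]
    {K : Set α} (hK : IsCompact K) {g : α → E} (hg : ContinuousOn g K) {x : E} {r : ℕ → ℝ}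
    (hr : Tendsto r atTop (𝓝 0)) (hx : ∃ᶠ n in atTop, ∃ s ∈ K, dist (g s) x ≤ r n) :
    x ∈ g '' K := by
  rw [← (hK.image_of_continuousOn hg).isClosed.closure_eq, Metric.mem_closure_iff]
  intro ε hε
  obtain ⟨n, ⟨s, hs, hsn⟩, hn⟩ := (hx.and_eventually (hr.eventually_lt_const hε)).exists
  exact ⟨g s, mem_image_of_mem g hs, (dist_comm x _).trans_lt (hsn.trans_lt hn)⟩

namespace IsCantorScale

variable {a q g : ℝ} {c : ℕ → ℝ}

lemma mul_le_abs_cantorNode_sub (h : IsCantorScale c q) {n : ℕ} {w w' : Fin n → Fin 2}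
    (hw : w ≠ w') : (1 - 2 * q) * c (firstDiff (padZero n w) (padZero n w')) ≤
      |cantorNode a c w - cantorNode a c w'| :=
  h.mul_le_abs_cantorPoint_sub ((padZero_injective n).ne hw)

lemma injective_cantorNode (h : IsCantorScale c q) (n : ℕ) :
    Function.Injective (cantorNode a c (n := n)) :=
  h.injective_cantorPoint.comp (padZero_injective n)

/-- Up to the factor `2 ^ n`, this is the `g`-potential at a node of the natural measure on the
Cantor set. -/
lemma exists_sum_inv_abs_cantorNode_sub_rpow_le (h : IsCantorScale c q) (hg : 0 ≤ g)
    (hsum : Summable fun k ↦ (2 ^ k * c k ^ g)⁻¹) :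
    ∃ S ≥ 0, ∀ n (w : Fin n → Fin 2),
      ∑ w' ∈ {w}ᶜ, (|cantorNode a c w - cantorNode a c w'| ^ g)⁻¹ ≤ 2 ^ n * S := by
  have hq : 0 < 1 - 2 * q := by linarith [h.lt_half]
  set φ : ℕ → ℝ := fun k ↦ (((1 - 2 * q) * c k) ^ g)⁻¹ with hφ
  have hsep (k) : 0 < ((1 - 2 * q) * c k) ^ g := Real.rpow_pos_of_pos (mul_pos hq (h.pos k)) g
  have hφ₀ (k) : 0 ≤ φ k := (inv_pos.2 (hsep k)).le
  have hφsum : Summable fun k ↦ (1 / 2) ^ k * φ k := by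
    refine (hsum.mul_left ((1 - 2 * q) ^ g)⁻¹).congr fun k ↦ ?_
    simp only [hφ]
    rw [Real.mul_rpow hq.le (h.pos k).le, one_div, inv_pow, mul_inv, mul_inv]
    ring
  have hterm₀ (k : ℕ) : 0 ≤ (1 / 2) ^ k * φ k := mul_nonneg (by positivity) (hφ₀ k)
  refine ⟨∑' k, (1 / 2) ^ k * φ k, tsum_nonneg hterm₀, fun n w ↦ ?_⟩
  calc _ ≤ ∑ w' ∈ {w}ᶜ, φ (firstDiff (padZero n w) (padZero n w')) := by
        refine Finset.sum_le_sum fun w' hw' ↦ inv_anti₀ (hsep _) ?_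
        refine Real.rpow_le_rpow (mul_pos hq (h.pos _)).le (h.mul_le_abs_cantorNode_sub ?_) hg
        simpa [eq_comm] using hw'
    _ ≤ 2 ^ n * ∑ k ∈ Finset.range n, (1 / 2) ^ k * φ k := sum_firstDiff_padZero_le hφ₀ n w
    _ ≤ 2 ^ n * ∑' k, (1 / 2) ^ k * φ k := by
        gcongr
        exact hφsum.sum_le_tsum _ fun k _ ↦ hterm₀ k

lemma exists_add_eq_of_frequently_mem_cubeEvent {Ω : Type*} {d : ℕ} (h : IsCantorScale c q)
    {B : Ω → ℝ → EuclideanSpace ℝ (Fin d)} {ω : Ω} (hB : ContinuousOn (B ω) (binaryCantorSet a c))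
    {f : ℝ → EuclideanSpace ℝ (Fin d)} (hf : ContinuousOn f (binaryCantorSet a c)) {r : ℕ → ℝ}
    (hr₀ : ∀ n, 0 ≤ r n) (hr : Tendsto r atTop (𝓝 0)) {x : EuclideanSpace ℝ (Fin d)}
    (hω : ∃ᶠ n in atTop, ∃ w : Fin n → Fin 2,
      ω ∈ cubeEvent B (cantorNode a c w) (x - f (cantorNode a c w)) (r n)) :
    ∃ s ∈ binaryCantorSet a c, B ω s + f s = x := by
  have hcont : ContinuousOn (fun s ↦ WithLp.ofLp (B ω s + f s)) (binaryCantorSet a c) :=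
    (PiLp.continuous_ofLp 2 _).comp_continuousOn (hB.add hf)
  have hdist : ∃ᶠ n in atTop, ∃ s ∈ binaryCantorSet a c,
      dist (WithLp.ofLp (B ω s + f s)) (WithLp.ofLp x) ≤ r n := hω.mono fun n ⟨w, hw⟩ ↦ by
    refine ⟨_, cantorNode_mem_binaryCantorSet a c w, (dist_pi_le_iff (hr₀ n)).2 fun i ↦ ?_⟩
    have hi := hw i
    rwa [mem_closedBall_iff_norm, PiLp.sub_apply, sub_sub_eq_add_sub, ← PiLp.add_apply,
      ← dist_eq_norm] at hi
  obtain ⟨s, hs, hsx⟩ :=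
    mem_image_of_frequently_dist_le h.isCompact_binaryCantorSet hcont hr hdist
  exact ⟨s, hs, WithLp.ofLp_injective 2 hsx⟩

end IsCantorScale

namespace IsFBM

variable {Ω : Type*} [MeasurableSpace Ω] {P : Measure Ω} [IsProbabilityMeasure P] {H : ℝ}
  {d : ℕ} {B : Ω → ℝ → EuclideanSpace ℝ (Fin d)} {a q : ℝ} {c : ℕ → ℝ}

lemma exists_sum_sum_measureReal_cubeEvent_inter_le (hB : IsFBM P H d B)
    (hH : H ∈ Ioo (0 : ℝ) 1) (ha : a ∈ Ioc (0 : ℝ) 1) (h : IsCantorScale c q)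
    (hsub : binaryCantorSet a c ⊆ Icc a 1) (hsum : Summable fun k ↦ (2 ^ k * c k ^ (H * d))⁻¹) :
    ∃ C > 0, ∀ n (y : (Fin n → Fin 2) → EuclideanSpace ℝ (Fin d)), ∀ ε ≥ 0,
      ∑ w, ∑ w', P.real (cubeEvent B (cantorNode a c w) (y w) ε ∩
        cubeEvent B (cantorNode a c w') (y w') ε) ≤ C * (2 ^ n * ε ^ d + (2 ^ n * ε ^ d) ^ 2) := by
  obtain ⟨D, hD₀, hD⟩ := hB.exists_measureReal_cubeEvent_le hH.1 ha.1
  obtain ⟨C, hC₀, hC⟩ := hB.exists_measureReal_cubeEvent_inter_le hH ha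
  obtain ⟨S, hS₀, hS⟩ := h.exists_sum_inv_abs_cantorNode_sub_rpow_le (a := a)
    (mul_nonneg hH.1.le d.cast_nonneg) hsum
  refine ⟨D + C * S, by positivity, fun n y ε hε ↦ ?_⟩
  have hnode {n} (w : Fin n → Fin 2) : cantorNode a c w ∈ Icc a 1 :=
    hsub (cantorNode_mem_binaryCantorSet a c w)
  have hrow (w : Fin n → Fin 2) : ∑ w', P.real (cubeEvent B (cantorNode a c w) (y w) ε ∩
      cubeEvent B (cantorNode a c w') (y w') ε) ≤
        D * ε ^ d + C * (ε ^ d) ^ 2 * (2 ^ n * S) := by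
    rw [Fintype.sum_eq_add_sum_compl w, inter_self]
    refine add_le_add (hD _ (hnode w) _ ε hε) ?_
    calc _ ≤ ∑ w' ∈ {w}ᶜ, C * (ε ^ d) ^ 2 * (|cantorNode a c w - cantorNode a c w'| ^ (H * d))⁻¹ :=
          Finset.sum_le_sum fun w' hw' ↦ hC _ (hnode w) _ (hnode w')
            ((h.injective_cantorNode n).ne (by simpa [eq_comm] using hw')) _ _ ε hε
      _ ≤ C * (ε ^ d) ^ 2 * (2 ^ n * S) := by
          rw [← Finset.mul_sum]
          gcongr
          exact hS n w
  refine (Finset.sum_le_sum fun w _ ↦ hrow w).trans ?_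
  rw [Finset.sum_const, Finset.card_univ, Fintype.card_pi_const, Fintype.card_fin, nsmul_eq_mul,
    Nat.cast_pow, Nat.cast_ofNat]
  have hcross : 0 ≤ D * (2 ^ n * ε ^ d) ^ 2 + C * S * (2 ^ n * ε ^ d) := by positivity
  linarith

lemma exists_le_measureReal_iUnion_cubeEvent (hB : IsFBM P H d B) (hH : H ∈ Ioo (0 : ℝ) 1)
    (ha : a ∈ Ioc (0 : ℝ) 1) (h : IsCantorScale c q) (hsub : binaryCantorSet a c ⊆ Icc a 1)
    (hsum : Summable fun k ↦ (2 ^ k * c k ^ (H * d))⁻¹) (M : ℝ) :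
    ∃ p > 0, ∀ n (y : (Fin n → Fin 2) → EuclideanSpace ℝ (Fin d)), (∀ w i, |y w i| ≤ M) →
      ∀ ε ∈ Icc (0 : ℝ) 1, 2 ^ n * ε ^ d = 1 →
        p ≤ P.real (⋃ w, cubeEvent B (cantorNode a c w) (y w) ε) := by
  obtain ⟨m, hm₀, hm⟩ := hB.exists_le_measureReal_cubeEvent hH.1 ha.1 M
  obtain ⟨C, hC₀, hC⟩ := hB.exists_sum_sum_measureReal_cubeEvent_inter_le hH ha h hsub hsum
  refine ⟨m ^ 2 / (C * 2), by positivity, fun n y hy ε hε hεd ↦ ?_⟩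
  have hfirst : m ≤ ∑ w, P.real (cubeEvent B (cantorNode a c w) (y w) ε) := by
    calc m = ∑ _w : Fin n → Fin 2, m * ε ^ d := by simp [mul_left_comm _ m, hεd]
      _ ≤ _ := Finset.sum_le_sum fun w _ ↦
          hm _ (hsub (cantorNode_mem_binaryCantorSet a c w)) _ (hy w) ε hε
  have hsecond := hC n y ε hε.1
  rw [hεd, one_pow, one_add_one_eq_two] at hsecond
  rw [div_le_iff₀' (by positivity)]
  calc m ^ 2 ≤ (∑ w, P.real (cubeEvent B (cantorNode a c w) (y w) ε)) ^ 2 := by gcongr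
    _ ≤ _ := sq_sum_measureReal_le fun w ↦ hB.measurableSet_cubeEvent _ _ ε
    _ ≤ C * 2 * _ := by gcongr

theorem measure_exists_binaryCantorSet_pos (hB : IsFBM P H d B) (hH : H ∈ Ioo (0 : ℝ) 1)
    (hd : d ≠ 0) (ha : 0 < a) (h : IsCantorScale c q) (hsub : binaryCantorSet a c ⊆ Icc a 1)
    (hsum : Summable fun k ↦ (2 ^ k * c k ^ (H * d))⁻¹)
    {f : ℝ → EuclideanSpace ℝ (Fin d)} (hf : ContinuousOn f (binaryCantorSet a c))
    (x : EuclideanSpace ℝ (Fin d)) :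
    0 < P {ω | ∃ s ∈ binaryCantorSet a c, B ω s + f s = x} := by
  have ha₁ : a ∈ Ioc (0 : ℝ) 1 := ⟨ha, nonempty_Icc.1 ((range_nonempty _).mono hsub)⟩
  obtain ⟨M, hM⟩ : ∃ M, ∀ s ∈ binaryCantorSet a c, ‖x - f s‖ ≤ M :=
    h.isCompact_binaryCantorSet.exists_bound_of_continuousOn (continuousOn_const.sub hf)
  obtain ⟨p, hp₀, hp⟩ := hB.exists_le_measureReal_iUnion_cubeEvent hH ha₁ h hsub hsum M
  set r : ℝ := (1 / 2) ^ (1 / (d : ℝ)) with hr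
  have hr₀ : 0 ≤ r := by positivity
  have hr₁ : r < 1 := Real.rpow_lt_one (by norm_num) (by norm_num) (by positivity)
  have hrd (n : ℕ) : 2 ^ n * (r ^ n) ^ d = 1 := by
    rw [pow_right_comm, hr, one_div (d : ℝ), Real.rpow_inv_natCast_pow (by norm_num) hd, ← mul_pow]
    norm_num
  set U : ℕ → Set Ω := fun n ↦ ⋃ w : Fin n → Fin 2,
    cubeEvent B (cantorNode a c w) (x - f (cantorNode a c w)) (r ^ n)
  have hU (n : ℕ) : MeasurableSet (U n) := .iUnion fun w ↦ hB.measurableSet_cubeEvent _ _ _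
  have hUp (n : ℕ) : ENNReal.ofReal p ≤ P (U n) :=
    (ENNReal.ofReal_le_iff_le_toReal (measure_ne_top _ _)).2 <| hp n _
      (fun w i ↦ (PiLp.norm_apply_le (x - f (cantorNode a c w)) i).trans
        (hM _ (cantorNode_mem_binaryCantorSet a c w)))
      _ ⟨by positivity, pow_le_one₀ hr₀ hr₁.le⟩ (hrd n)
  calc 0 < ENNReal.ofReal p := ENNReal.ofReal_pos.2 hp₀
    _ ≤ P (limsup U atTop) := le_measure_limsup_atTop hU hUp
    _ ≤ _ := measure_mono fun ω hω ↦ h.exists_add_eq_of_frequently_mem_cubeEvent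
        ((hB.cont ω).mono (hsub.trans (Icc_subset_Icc_left ha.le))) hf (fun n ↦ pow_nonneg hr₀ n)
        (tendsto_pow_atTop_nhds_zero_of_lt_one hr₀ hr₁)
        ((mem_limsup_iff_frequently_mem.1 hω).mono fun _ ↦ mem_iUnion.1)

end IsFBM

end NonpolarCantorSets

/-- Proposition 6.1: if `Hd < 1` and `f` is `H`-Hölder continuous,
there are Borel sets `E₁, E₂ ⊆ I` of Hausdorff dimension `Hd` such that every point is
polar for `(B^H+f)|_{E₁}` and non-polar for `(B^H+f)|_{E₂}`. -/
theorem statement17 {Ω : Type*} [MeasurableSpace Ω] (ℙ : Measure Ω) [IsProbabilityMeasure ℙ]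
    (H : ℝ) (hH : H ∈ Set.Ioo (0 : ℝ) 1) (d : ℕ) (hd : 0 < d)
    (hHd : H * d < 1)
    (B : Ω → ℝ → EuclideanSpace ℝ (Fin d)) (hB : IsFBM ℙ H d B)
    (a b : ℝ) (ha : 0 < a) (hab : a < b) (hb : b ≤ 1)
    (f : ℝ → EuclideanSpace ℝ (Fin d)) (hf : HolderWithExp f H (Set.Icc 0 1)) :
    ∃ E₁ E₂ : Set ℝ, MeasurableSet E₁ ∧ MeasurableSet E₂ ∧
      E₁ ⊆ Set.Icc a b ∧ E₂ ⊆ Set.Icc a b ∧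
      dimH E₁ = ENNReal.ofReal (H * d) ∧ dimH E₂ = ENNReal.ofReal (H * d) ∧
      ∀ x : EuclideanSpace ℝ (Fin d),
        ℙ {ω | ∃ s ∈ E₁, B ω s + f s = x} = 0 ∧
        0 < ℙ {ω | ∃ s ∈ E₂, B ω s + f s = x} := by
  have hg : H * d ∈ Ioo (0 : ℝ) 1 := ⟨mul_pos hH.1 (Nat.cast_pos.2 hd), hHd⟩
  have hL : 0 < b - a := sub_pos.2 hab
  obtain ⟨δ₁, hδ₁, q₁, h₁⟩ := exists_isCantorScale_polyScale hg hL (-(d + 2))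
  obtain ⟨δ₂, hδ₂, q₂, h₂⟩ := exists_isCantorScale_polyScale hg hL 2
  have hsub₁ := binaryCantorSet_polyScale_subset_Icc (a := a) h₁
  have hsub₂ := binaryCantorSet_polyScale_subset_Icc (a := a) h₂
  rw [add_sub_cancel] at hsub₁ hsub₂
  have hI : Icc a b ⊆ Icc a 1 := Icc_subset_Icc_right hb
  refine ⟨_, _, h₁.isCompact_binaryCantorSet.measurableSet,
    h₂.isCompact_binaryCantorSet.measurableSet, hsub₁, hsub₂,
    dimH_binaryCantorSet_polyScale h₁ hg.1 hL hδ₁.1,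
    dimH_binaryCantorSet_polyScale h₂ hg.1 hL hδ₂.1, fun x ↦ ⟨?_, ?_⟩⟩
  · exact hB.measure_exists_binaryCantorSet_eq_zero hH.1 ha h₁ (hsub₁.trans hI)
      (summable_two_pow_mul_polyScale_rpow_mul_pow hg.1.ne' hL.le hδ₁ d) hf x
  · exact hB.measure_exists_binaryCantorSet_pos hH hd.ne' ha h₂ (hsub₂.trans hI)
      (summable_inv_two_pow_mul_polyScale_rpow hg.1.ne' hL.le hδ₂)
      ((hf.continuousOn hH.1).mono (hsub₂.trans (hI.trans (Icc_subset_Icc_left ha.le)))) x
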